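/- Uniformity principle in dimension one: Fix a demand-to-supply ratio β > 0 and a constant M ≥ max{1, 1/β}, and let k = 1. There exist a constant C > 0 depending only on β and M and an integer N such that for all n ≥ N with m = βn, and for all service-range vectors r, r' ∈ [0, M]^n satisfying r ⪰ r' (r majorizes r') and ‖r^↓ − r'^↓‖₁ > θn for some θ > C·(log n / n)^{1/3}, the expected maximum matching sizes satisfy μ_m(r') > μ_m(r). -/

import Mathlib

open MeasureTheory
open scoped Classical

noncomputable section

/-- A matching of a bipartite compatibility relation, given as a finite set of
supply-demand pairs with compatible endpoints and pairwise distinct coordinates. -/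
def IsBipMatching {a b : ℕ} (adj : Fin a → Fin b → Prop) (M : Finset (Fin a × Fin b)) : Prop :=
  (∀ e ∈ M, adj e.1 e.2) ∧
    ∀ e ∈ M, ∀ e' ∈ M, e ≠ e' → e.1 ≠ e'.1 ∧ e.2 ≠ e'.2

/-- The maximum cardinality of a matching of the bipartite compatibility relation. -/
def matchingNumber {a b : ℕ} (adj : Fin a → Fin b → Prop) : ℕ :=
  sSup {c | ∃ M : Finset (Fin a × Fin b), IsBipMatching adj M ∧ M.card = c}

/-- The uniform measure on the unit cube `[0,1]^k`. -/
def unifCube (k : ℕ) : Measure (EuclideanSpace ℝ (Fin k)) :=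
  volume.restrict {x | ∀ i, x i ∈ Set.Icc (0 : ℝ) 1}

/-- Compatibility: supply node `i` can serve demand node `j` iff the demand location is
within distance `(r i / n)^(1/k)` of the supply location. -/
def adjOf (k ntot : ℕ) {a b : ℕ} (S : Fin a → EuclideanSpace ℝ (Fin k)) (r : Fin a → ℝ)
    (D : Fin b → EuclideanSpace ℝ (Fin k)) (i : Fin a) (j : Fin b) : Prop :=
  dist (S i) (D j) ≤ (r i / (ntot : ℝ)) ^ ((1 : ℝ) / (k : ℝ))

/-- Expected maximum matching size, with supply and demand locations i.i.d. uniform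
on the unit cube `[0,1]^k`. -/
def muU (k ntot m : ℕ) {a : ℕ} (r : Fin a → ℝ) : ℝ :=
  ∫ S : Fin a → EuclideanSpace ℝ (Fin k),
    ∫ D : Fin m → EuclideanSpace ℝ (Fin k),
      (matchingNumber (fun i j => adjOf k ntot S r D i j) : ℝ)
        ∂(Measure.pi fun _ => unifCube k) ∂(Measure.pi fun _ => unifCube k)

/-- The non-increasing rearrangement of a finite real vector. -/
def descSort {n : ℕ} (x : Fin n → ℝ) : Fin n → ℝ :=
  x ∘ Tuple.sort (fun i => -x i)

/-- `x` majorizes `y`. -/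
def Majorizes {n : ℕ} (x y : Fin n → ℝ) : Prop :=
  (∀ ℓ : ℕ,
      ∑ i ∈ Finset.univ.filter (fun i : Fin n => (i : ℕ) < ℓ), descSort y i ≤
        ∑ i ∈ Finset.univ.filter (fun i : Fin n => (i : ℕ) < ℓ), descSort x i) ∧
    ∑ i, x i = ∑ i, y i


/-! ### Part A: combinatorics -/

def nbS {a b : ℕ} (adj : Fin a → Fin b → Prop) (T : Finset (Fin b)) : Finset (Fin a) :=
  Finset.univ.filter (fun k => ∃ d ∈ T, adj k d)

def cov {a b : ℕ} (adj : Fin a → Fin b → Prop) (T : Finset (Fin b)) : ℕ :=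
  (nbS adj T).card + Tᶜ.card

lemma mem_nbS {a b : ℕ} (adj : Fin a → Fin b → Prop) (T : Finset (Fin b)) (k : Fin a) :
    k ∈ nbS adj T ↔ ∃ d ∈ T, adj k d := by simp [nbS]

lemma isMatching_card_le {a b : ℕ} (adj : Fin a → Fin b → Prop) (P : Finset (Fin a × Fin b))
    (hP : IsBipMatching adj P) (T : Finset (Fin b)) : P.card ≤ cov adj T := by
  obtain ⟨h1, h2⟩ := hP
  rw [← Finset.card_filter_add_card_filter_not (s := P) (fun e => e.2 ∈ T)]
  apply Nat.add_le_add
  · apply Finset.card_le_card_of_injOn Prod.fst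
    · intro e he
      simp only [Finset.coe_filter, Set.mem_ofPred_eq] at he
      simp only [Finset.mem_coe, mem_nbS]
      exact ⟨e.2, he.2, h1 e he.1⟩
    · intro e he e' he' hh
      simp only [Finset.coe_filter, Set.mem_ofPred_eq] at he he'
      by_contra hne
      exact (h2 e he.1 e' he'.1 hne).1 hh
  · apply Finset.card_le_card_of_injOn Prod.snd
    · intro e he
      simp only [Finset.coe_filter, Set.mem_ofPred_eq] at he
      simpa using he.2
    · intro e he e' he' hh
      simp only [Finset.coe_filter, Set.mem_ofPred_eq] at he he'
      by_contra hne
      exact (h2 e he.1 e' he'.1 hne).2 hh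

lemma matchingNumber_le_cov {a b : ℕ} (adj : Fin a → Fin b → Prop) (T : Finset (Fin b)) :
    matchingNumber adj ≤ cov adj T := by
  apply csSup_le
  · exact ⟨0, ∅, ⟨by simp, by simp⟩, by simp⟩
  · rintro c ⟨P, hP, rfl⟩
    exact isMatching_card_le adj P hP T

lemma le_matchingNumber {a b : ℕ} (adj : Fin a → Fin b → Prop) (P : Finset (Fin a × Fin b))
    (hP : IsBipMatching adj P) : P.card ≤ matchingNumber adj := by
  apply le_csSup
  · refine ⟨cov adj ∅, ?_⟩
    rintro c ⟨P, hP, rfl⟩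
    exact isMatching_card_le adj P hP ∅
  · exact ⟨P, hP, rfl⟩

lemma exists_cov_le {a b : ℕ} (adj : Fin a → Fin b → Prop) :
    ∃ T, cov adj T ≤ matchingNumber adj := by
  obtain ⟨T, -, hT⟩ := Finset.exists_min_image (Finset.univ : Finset (Finset (Fin b)))
    (cov adj) ⟨∅, Finset.mem_univ _⟩
  refine ⟨T, ?_⟩
  have hTb : cov adj T ≤ b := by
    refine (hT ∅ (Finset.mem_univ _)).trans ?_
    simp [cov, nbS]
  -- Hall with dummies
  let f : Fin b → Finset (Fin a ⊕ Fin (b - cov adj T)) := fun d =>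
    (Finset.univ.filter (fun k => adj k d)).disjSum Finset.univ
  have hall : ∀ s : Finset (Fin b), s.card ≤ (s.biUnion f).card := by
    intro s
    rcases s.eq_empty_or_nonempty with rfl | ⟨d0, hd0⟩
    · simp
    have h1 : (nbS adj s).disjSum (Finset.univ : Finset (Fin (b - cov adj T))) ⊆ s.biUnion f := by
      intro z hz
      rw [Finset.mem_disjSum] at hz
      rw [Finset.mem_biUnion]
      rcases hz with ⟨k, hk, rfl⟩ | ⟨k, hk, rfl⟩
      · rw [mem_nbS] at hk
        obtain ⟨d, hd, hkd⟩ := hk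
        exact ⟨d, hd, by simp [f, hkd]⟩
      · exact ⟨d0, hd0, by simp [f]⟩
    have h2 := Finset.card_le_card h1
    rw [Finset.card_disjSum, Finset.card_univ, Fintype.card_fin] at h2
    have h3 := hT s (Finset.mem_univ _)
    have h4 : s.card + sᶜ.card = b := by
      rw [Finset.card_add_card_compl]; simp
    have h5 : cov adj s = (nbS adj s).card + sᶜ.card := rfl
    omega
  obtain ⟨g, ginj, hg⟩ := (Finset.all_card_le_biUnion_card_iff_exists_injective f).1 hall
  let P : Finset (Fin a × Fin b) := Finset.univ.filter (fun e => g e.2 = Sum.inl e.1)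
  have hP : IsBipMatching adj P := by
    constructor
    · intro e he
      have he' : g e.2 = Sum.inl e.1 := by simpa [P] using he
      have := hg e.2
      rw [he'] at this
      simpa [f] using this
    · intro e he e' he' hne
      have h1 : g e.2 = Sum.inl e.1 := by simpa [P] using he
      have h2 : g e'.2 = Sum.inl e'.1 := by simpa [P] using he'
      constructor
      · intro h
        apply hne
        refine Prod.ext h (ginj ?_)
        rw [h1, h2, h]
      · intro h
        apply hne
        refine Prod.ext ?_ h
        rw [h, h2] at h1
        exact (Sum.inl.inj h1).symm
  have hcard : cov adj T ≤ P.card := by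
    -- all demands inject to P ⊕ dummies
    have key : (Finset.univ : Finset (Fin b)).card ≤ ((P.image Prod.snd).disjSum
        (Finset.univ : Finset (Fin (b - cov adj T)))).card := by
      apply Finset.card_le_card_of_injOn
        (fun d => match g d with | Sum.inl _ => Sum.inl d | Sum.inr q => Sum.inr q)
      · intro d _
        simp only [Finset.mem_coe]
        rcases hgd : g d with k | q
        · simp only [Finset.inl_mem_disjSum, Finset.mem_image]
          exact ⟨(k, d), by simp [P, hgd], rfl⟩
        · simp
      · intro d _ d' _ hh
        rcases hgd : g d with k | q <;> rcases hgd' : g d' with k' | q' <;>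
          simp only [hgd, hgd'] at hh
        · exact Sum.inl.inj hh
        · cases hh
        · cases hh
        · apply ginj; rw [hgd, hgd', Sum.inr.inj hh]
    rw [Finset.card_disjSum] at key
    simp only [Finset.card_univ, Fintype.card_fin] at key
    have := Finset.card_image_le (s := P) (f := Prod.snd)
    omega
  exact hcard.trans (le_matchingNumber adj P hP)

lemma matchingNumber_eq_of_min {a b : ℕ} (adj : Fin a → Fin b → Prop) (W : Finset (Fin b))
    (h : ∀ T, cov adj W ≤ cov adj T) : matchingNumber adj = cov adj W := by
  obtain ⟨T, hT⟩ := exists_cov_le adj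
  exact le_antisymm (matchingNumber_le_cov adj W) ((h T).trans hT)

lemma cov_submod {a b : ℕ} (adj : Fin a → Fin b → Prop) (T U : Finset (Fin b)) :
    cov adj (T ∩ U) + cov adj (T ∪ U) ≤ cov adj T + cov adj U := by
  have h1 : (nbS adj (T ∩ U)).card + (nbS adj (T ∪ U)).card ≤
      (nbS adj T).card + (nbS adj U).card := by
    rw [← Finset.card_inter_add_card_union (nbS adj T)]
    apply Nat.add_le_add
    · apply Finset.card_le_card
      intro k hk
      rw [Finset.mem_inter, mem_nbS, mem_nbS]
      rw [mem_nbS] at hk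
      obtain ⟨d, hd, h⟩ := hk
      rw [Finset.mem_inter] at hd
      exact ⟨⟨d, hd.1, h⟩, ⟨d, hd.2, h⟩⟩
    · apply Finset.card_le_card
      intro k hk
      rw [Finset.mem_union, mem_nbS, mem_nbS]
      rw [mem_nbS] at hk
      obtain ⟨d, hd, h⟩ := hk
      rw [Finset.mem_union] at hd
      rcases hd with hd | hd
      · exact Or.inl ⟨d, hd, h⟩
      · exact Or.inr ⟨d, hd, h⟩
  have h2 : (T ∩ U)ᶜ.card + (T ∪ U)ᶜ.card = Tᶜ.card + Uᶜ.card := by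
    rw [Finset.compl_inter, Finset.compl_union, Finset.card_union_add_card_inter]
  unfold cov
  omega

lemma exists_minimal {a b : ℕ} (adj : Fin a → Fin b → Prop) :
    ∃ W, (∀ T, cov adj W ≤ cov adj T) ∧ ∀ T, cov adj T ≤ cov adj W → W ⊆ T := by
  obtain ⟨T0, -, hT0⟩ := Finset.exists_min_image (Finset.univ : Finset (Finset (Fin b)))
    (cov adj) ⟨∅, Finset.mem_univ _⟩
  obtain ⟨W, hW, hWmin⟩ := Finset.exists_min_image
    ((Finset.univ : Finset (Finset (Fin b))).filter (fun T => cov adj T ≤ cov adj T0))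
    Finset.card ⟨T0, by simp⟩
  have hW' : cov adj W ≤ cov adj T0 := by simpa using hW
  have hm : ∀ T, cov adj W ≤ cov adj T := fun T => hW'.trans (hT0 T (Finset.mem_univ _))
  refine ⟨W, hm, ?_⟩
  intro T hT
  have h1 := cov_submod adj W T
  have h2 := hm (W ∪ T)
  have h3 : cov adj (W ∩ T) ≤ cov adj T0 := by omega
  have h4 := hWmin (W ∩ T) (by simpa using h3)
  have h5 : W ∩ T = W := Finset.eq_of_subset_of_card_le Finset.inter_subset_left h4
  rw [← h5]; exact Finset.inter_subset_right

def Wf {a b : ℕ} (adj : Fin a → Fin b → Prop) : Finset (Fin b) := (exists_minimal adj).choose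

lemma Wf_min {a b : ℕ} (adj : Fin a → Fin b → Prop) (T) : cov adj (Wf adj) ≤ cov adj T :=
  (exists_minimal adj).choose_spec.1 T

lemma Wf_sub {a b : ℕ} (adj : Fin a → Fin b → Prop) (T) (h : cov adj T ≤ cov adj (Wf adj)) :
    Wf adj ⊆ T :=
  (exists_minimal adj).choose_spec.2 T h

lemma isolated_mem_Wf {a b : ℕ} (adj : Fin a → Fin b → Prop) (d : Fin b)
    (hd : ∀ k, ¬ adj k d) : d ∈ Wf adj := by
  by_contra hn
  have h1 := Wf_min adj (insert d (Wf adj))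
  have h2 : nbS adj (insert d (Wf adj)) = nbS adj (Wf adj) := by
    ext k
    simp only [mem_nbS, Finset.mem_insert]
    constructor
    · rintro ⟨e, he | he, h⟩
      · subst he; exact absurd h (hd k)
      · exact ⟨e, he, h⟩
    · rintro ⟨e, he, h⟩; exact ⟨e, Or.inr he, h⟩
  unfold cov at h1
  rw [h2, Finset.card_compl, Finset.card_compl, Finset.card_insert_of_notMem hn] at h1
  have h3 : (Wf adj).card < Fintype.card (Fin b) := by
    rw [← Finset.card_univ]
    apply Finset.card_lt_card
    refine ⟨Finset.subset_univ _, fun h => hn (h (Finset.mem_univ d))⟩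
  omega

def adj0 {a b : ℕ} (i j : Fin a) (adj : Fin a → Fin b → Prop) : Fin a → Fin b → Prop :=
  fun k d => k ≠ i ∧ k ≠ j ∧ adj k d

lemma cov_adj0 {a b : ℕ} (i j : Fin a) (hij : i ≠ j) (adj : Fin a → Fin b → Prop)
    (T : Finset (Fin b)) :
    cov adj T = cov (adj0 i j adj) T + (if ∃ d ∈ T, adj i d then 1 else 0)
      + (if ∃ d ∈ T, adj j d then 1 else 0) := by
  have h : nbS adj T = (nbS (adj0 i j adj) T ∪ (if ∃ d ∈ T, adj i d then {i} else ∅)) ∪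
      (if ∃ d ∈ T, adj j d then {j} else ∅) := by
    ext k
    simp only [Finset.mem_union, mem_nbS, adj0]
    by_cases hki : k = i
    · subst hki
      split_ifs <;> simp_all
    by_cases hkj : k = j
    · subst hkj
      split_ifs <;> simp_all
    split_ifs <;> simp_all
  unfold cov
  rw [h, Finset.card_union_of_disjoint, Finset.card_union_of_disjoint]
  · split_ifs <;> simp <;> omega
  · split_ifs
    · simp [mem_nbS, adj0]
    · simp
  · split_ifs <;> simp [mem_nbS, adj0, hij.symm]

lemma matching_upper {a b : ℕ} (i j : Fin a) (hij : i ≠ j) (adj : Fin a → Fin b → Prop) :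
    matchingNumber adj ≤ cov (adj0 i j adj) (Wf (adj0 i j adj))
      + (if ∃ d ∈ Wf (adj0 i j adj), adj i d then 1 else 0)
      + (if ∃ d ∈ Wf (adj0 i j adj), adj j d then 1 else 0) := by
  rw [← cov_adj0 i j hij adj]
  exact matchingNumber_le_cov _ _

lemma matching_lower0 {a b : ℕ} (i j : Fin a) (hij : i ≠ j) (adj : Fin a → Fin b → Prop) :
    cov (adj0 i j adj) (Wf (adj0 i j adj)) ≤ matchingNumber adj := by
  obtain ⟨T, hT⟩ := exists_cov_le adj
  have := cov_adj0 i j hij adj T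
  have := Wf_min (adj0 i j adj) T
  omega

lemma cov_split {a b : ℕ} (adj : Fin a → Fin b → Prop) (L : Fin b → Prop)
    (hsep : ∀ k d d', adj k d → adj k d' → L d → L d') (T U : Finset (Fin b)) :
    cov adj (T.filter L ∪ U.filter (fun d => ¬ L d)) + cov adj (U.filter L ∪ T.filter (fun d => ¬ L d))
      = cov adj T + cov adj U := by
  have nb_split : ∀ A B : Finset (Fin b),
      (nbS adj (A.filter L ∪ B.filter (fun d => ¬ L d))).card =
        (nbS adj (A.filter L)).card + (nbS adj (B.filter (fun d => ¬ L d))).card := by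
    intro A B
    rw [← Finset.card_union_of_disjoint]
    · congr 1
      ext k
      simp only [Finset.mem_union, mem_nbS]
      constructor
      · rintro ⟨d, hd | hd, h⟩
        · exact Or.inl ⟨d, hd, h⟩
        · exact Or.inr ⟨d, hd, h⟩
      · rintro (⟨d, hd, h⟩ | ⟨d, hd, h⟩)
        · exact ⟨d, Or.inl hd, h⟩
        · exact ⟨d, Or.inr hd, h⟩
    · rw [Finset.disjoint_left]
      intro k hk hk'
      rw [mem_nbS] at hk hk'
      obtain ⟨d, hd, h⟩ := hk
      obtain ⟨d', hd', h'⟩ := hk'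
      rw [Finset.mem_filter] at hd hd'
      exact hd'.2 (hsep k d d' h h' hd.2)
  have card_split : ∀ A B : Finset (Fin b),
      (A.filter L ∪ B.filter (fun d => ¬ L d)).card =
        (A.filter L).card + (B.filter (fun d => ¬ L d)).card := by
    intro A B
    apply Finset.card_union_of_disjoint
    rw [Finset.disjoint_left]
    intro d hd hd'
    rw [Finset.mem_filter] at hd hd'
    exact hd'.2 hd.2
  have self : ∀ A : Finset (Fin b), A.filter L ∪ A.filter (fun d => ¬ L d) = A :=
    fun A => Finset.filter_union_filter_not_eq L A
  have e1 := nb_split T T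
  have e2 := nb_split U U
  have e3 := nb_split T U
  have e4 := nb_split U T
  have c1 := card_split T T
  have c2 := card_split U U
  have c3 := card_split T U
  have c4 := card_split U T
  rw [self] at e1 e2 c1 c2
  have q1 := Finset.card_add_card_compl T
  have q2 := Finset.card_add_card_compl U
  have q3 := Finset.card_add_card_compl (T.filter L ∪ U.filter (fun d => ¬ L d))
  have q4 := Finset.card_add_card_compl (U.filter L ∪ T.filter (fun d => ¬ L d))
  unfold cov
  omega

lemma matching_lower {a b : ℕ} (i j : Fin a) (hij : i ≠ j) (adj : Fin a → Fin b → Prop)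
    (L : Fin b → Prop) (hsep : ∀ k d d', adj k d → adj k d' → L d → L d')
    (hi : ∀ d, adj i d → L d) (hj : ∀ d, adj j d → ¬ L d) :
    cov (adj0 i j adj) (Wf (adj0 i j adj))
      + (if ∃ d ∈ Wf (adj0 i j adj), adj i d then 1 else 0)
      + (if ∃ d ∈ Wf (adj0 i j adj), adj j d then 1 else 0) ≤ matchingNumber adj := by
  obtain ⟨T, hT⟩ := exists_cov_le adj
  refine le_trans ?_ hT
  rw [cov_adj0 i j hij adj T]
  set W := Wf (adj0 i j adj) with hWdef
  have hmin := Wf_min (adj0 i j adj)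
  have hsub := Wf_sub (adj0 i j adj)
  rw [← hWdef] at hmin hsub
  have hspl := cov_split (adj0 i j adj) L
    (fun k d d' h h' hL => hsep k d d' h.2.2 h'.2.2 hL) T W
  have hle := hmin T
  have m1 := hmin (T.filter L ∪ W.filter (fun d => ¬ L d))
  have m2 := hmin (W.filter L ∪ T.filter (fun d => ¬ L d))
  have s0 := hsub T
  have s1 := hsub (T.filter L ∪ W.filter (fun d => ¬ L d))
  have s2 := hsub (W.filter L ∪ T.filter (fun d => ¬ L d))
  -- if the left hybrid is a minimizer then i-hit transfers
  have t1 : cov (adj0 i j adj) (T.filter L ∪ W.filter (fun d => ¬ L d)) ≤ cov (adj0 i j adj) W →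
      (∃ d ∈ W, adj i d) → ∃ d ∈ T, adj i d := by
    rintro h ⟨d, hd, hid⟩
    have := s1 h hd
    simp only [Finset.mem_union, Finset.mem_filter] at this
    rcases this with h | h
    · exact ⟨d, h.1, hid⟩
    · exact absurd (hi d hid) h.2
  have t2 : cov (adj0 i j adj) (W.filter L ∪ T.filter (fun d => ¬ L d)) ≤ cov (adj0 i j adj) W →
      (∃ d ∈ W, adj j d) → ∃ d ∈ T, adj j d := by
    rintro h ⟨d, hd, hid⟩
    have := s2 h hd
    simp only [Finset.mem_union, Finset.mem_filter] at this
    rcases this with h | h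
    · exact absurd h.2 (hj d hid)
    · exact ⟨d, h.1, hid⟩
  have k1 : (∃ d ∈ W, adj i d) → ¬ (∃ d ∈ T, adj i d) → cov (adj0 i j adj) W <
      cov (adj0 i j adj) (T.filter L ∪ W.filter (fun d => ¬ L d)) := by
    intro h h'
    by_contra hc
    exact h' (t1 (not_lt.1 hc) h)
  have k2 : (∃ d ∈ W, adj j d) → ¬ (∃ d ∈ T, adj j d) → cov (adj0 i j adj) W <
      cov (adj0 i j adj) (W.filter L ∪ T.filter (fun d => ¬ L d)) := by
    intro h h'
    by_contra hc
    exact h' (t2 (not_lt.1 hc) h)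
  clear t1 t2 s0 s1 s2 hsub hmin
  split_ifs with A B A' B' B' A' B' B' B A' B' B' A' B' B' <;>
    (try have z1 := k1 ‹_› ‹_›) <;> (try have z2 := k2 ‹_› ‹_›) <;> omega

lemma matchingNumber_perm {a b : ℕ} (adj : Fin a → Fin b → Prop) (σ : Equiv.Perm (Fin a)) :
    matchingNumber (fun k d => adj (σ k) d) = matchingNumber adj := by
  have hc : ∀ T, cov (fun k d => adj (σ k) d) T = cov adj T := by
    intro T
    unfold cov
    congr 1
    rw [← Finset.card_map σ.toEmbedding]
    congr 1
    ext k
    simp only [Finset.mem_map, mem_nbS, Equiv.toEmbedding_apply]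
    constructor
    · rintro ⟨k', h, rfl⟩; exact h
    · intro h; exact ⟨σ.symm k, by simpa using h, by simp⟩
  apply le_antisymm
  · obtain ⟨T, hT⟩ := exists_cov_le adj
    exact ((matchingNumber_le_cov _ T).trans (hc T).le).trans hT
  · obtain ⟨T, hT⟩ := exists_cov_le (fun k d => adj (σ k) d)
    exact ((matchingNumber_le_cov _ T).trans (hc T).ge).trans hT


/-! ### Part B: measure basics -/

def nu : Measure ℝ := volume.restrict (Set.Icc (0 : ℝ) 1)

instance nu_prob : IsProbabilityMeasure nu := ⟨by simp [nu]⟩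

def PP (a : ℕ) : Measure (Fin a → ℝ) := Measure.pi fun _ => nu

instance PP_prob (a : ℕ) : IsProbabilityMeasure (PP a) := by unfold PP; infer_instance

def QQ (n m : ℕ) : Measure ((Fin n → ℝ) × (Fin m → ℝ)) := (PP n).prod (PP m)

instance QQ_prob (n m : ℕ) : IsProbabilityMeasure (QQ n m) := by unfold QQ; infer_instance

def adjR {a b : ℕ} (nn : ℕ) (r : Fin a → ℝ) (ω : (Fin a → ℝ) × (Fin b → ℝ)) (i : Fin a)
    (j : Fin b) : Prop :=
  |ω.1 i - ω.2 j| ≤ r i / nn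

def muR (n m : ℕ) (r : Fin n → ℝ) : ℝ := ∫ ω, (matchingNumber (adjR n r ω) : ℝ) ∂(QQ n m)

lemma meas_adjR {a b : ℕ} (nn : ℕ) (r : Fin a → ℝ) :
    Measurable (fun ω : (Fin a → ℝ) × (Fin b → ℝ) => adjR nn r ω) := by
  refine measurable_pi_iff.2 fun i => measurable_pi_iff.2 fun j => ?_
  apply measurableSet_setOfPred.1
  apply measurableSet_le <;> fun_prop

lemma meas_fun_adjR {a b : ℕ} (nn : ℕ) (r : Fin a → ℝ) {γ : Type*} [MeasurableSpace γ]
    (Φ : (Fin a → Fin b → Prop) → γ) :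
    Measurable (fun ω : (Fin a → ℝ) × (Fin b → ℝ) => Φ (adjR nn r ω)) :=
  Measurable.of_discrete.comp (meas_adjR nn r)

lemma matchingNumber_le {a b : ℕ} (adj : Fin a → Fin b → Prop) : matchingNumber adj ≤ b := by
  refine (matchingNumber_le_cov adj ∅).trans ?_
  simp [cov, nbS]

lemma integrable_matching (n m : ℕ) (r : Fin n → ℝ) :
    Integrable (fun ω => (matchingNumber (adjR n r ω) : ℝ)) (QQ n m) := by
  refine Integrable.of_bound (C := (m : ℝ)) ?_ ?_
  · exact (meas_fun_adjR n r (fun A => (matchingNumber A : ℝ))).aestronglyMeasurable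
  · refine Filter.Eventually.of_forall fun ω => ?_
    rw [Real.norm_natCast]
    exact_mod_cast matchingNumber_le _

lemma mp_coord : MeasurePreserving (fun x : EuclideanSpace ℝ (Fin 1) => x 0) (unifCube 1) nu := by
  have h1 : MeasurePreserving (fun x : EuclideanSpace ℝ (Fin 1) => x 0) volume volume :=
    (volume_preserving_funUnique (Fin 1) ℝ).comp (PiLp.volume_preserving_ofLp (Fin 1))
  have h2 := h1.restrict_preimage (s := Set.Icc (0 : ℝ) 1) measurableSet_Icc
  have h3 : {x : EuclideanSpace ℝ (Fin 1) | ∀ i, x i ∈ Set.Icc (0 : ℝ) 1} =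
      (fun x : EuclideanSpace ℝ (Fin 1) => x 0) ⁻¹' Set.Icc (0 : ℝ) 1 := by
    ext x
    simp [Fin.forall_fin_one]
  unfold unifCube nu
  rw [h3]
  exact h2

lemma mp_pi (a : ℕ) : MeasurePreserving
    (fun (S : Fin a → EuclideanSpace ℝ (Fin 1)) (k : Fin a) => S k 0)
    (Measure.pi fun _ => unifCube 1) (PP a) :=
  measurePreserving_pi _ _ (fun _ => mp_coord)

lemma adjOf_one {a b : ℕ} (nn : ℕ) (S : Fin a → EuclideanSpace ℝ (Fin 1)) (r : Fin a → ℝ)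
    (D : Fin b → EuclideanSpace ℝ (Fin 1)) :
    (fun i j => adjOf 1 nn S r D i j) = adjR nn r (fun k => S k 0, fun k => D k 0) := by
  funext i j
  unfold adjOf adjR
  rw [EuclideanSpace.dist_eq]
  simp [Real.sqrt_sq_eq_abs, Real.dist_eq]

lemma muU_eq (n m : ℕ) (r : Fin n → ℝ) : muU 1 n m r = muR n m r := by
  unfold muU muR
  simp_rw [adjOf_one]
  have hin : ∀ S : Fin n → ℝ, ∫ D : Fin m → EuclideanSpace ℝ (Fin 1),
      (matchingNumber (adjR n r (S, fun k => D k 0)) : ℝ) ∂(Measure.pi fun _ => unifCube 1) =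
      ∫ D, (matchingNumber (adjR n r (S, D)) : ℝ) ∂(PP m) := by
    intro S
    rw [← (mp_pi m).map_eq, integral_map (mp_pi m).measurable.aemeasurable]
    exact ((meas_fun_adjR n r (fun A => (matchingNumber A : ℝ))).comp
      (measurable_prodMk_left)).aestronglyMeasurable
  simp_rw [hin]
  unfold QQ
  rw [integral_prod _ (integrable_matching n m r)]
  have hm := (integrable_matching n m r).integral_prod_left.aestronglyMeasurable
  rw [← (mp_pi n).map_eq] at hm
  rw [← (mp_pi n).map_eq, integral_map (mp_pi n).measurable.aemeasurable hm]

lemma mp_perm (n : ℕ) (σ : Equiv.Perm (Fin n)) :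
    MeasurePreserving (fun (S : Fin n → ℝ) k => S (σ k)) (PP n) (PP n) := by
  refine ⟨by fun_prop, ?_⟩
  unfold PP
  refine (Measure.pi_eq fun s hs => ?_).symm
  rw [Measure.map_apply (by fun_prop) (MeasurableSet.univ_pi hs)]
  have : (fun (S : Fin n → ℝ) k => S (σ k)) ⁻¹' Set.univ.pi s = Set.univ.pi (fun k => s (σ.symm k)) := by
    ext S
    simp only [Set.mem_preimage, Set.mem_univ_pi]
    constructor
    · intro h k
      simpa using h (σ.symm k)
    · intro h k
      simpa using h (σ k)
  rw [this, Measure.pi_pi]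
  exact Equiv.prod_comp σ.symm (fun k => nu (s k))

lemma mp_permQ (n m : ℕ) (σ : Equiv.Perm (Fin n)) :
    MeasurePreserving (fun (ω : (Fin n → ℝ) × (Fin m → ℝ)) => ((fun k => ω.1 (σ k)), ω.2))
      (QQ n m) (QQ n m) :=
  (mp_perm n σ).prod (MeasurePreserving.id _)

lemma muR_perm (n m : ℕ) (r : Fin n → ℝ) (σ : Equiv.Perm (Fin n)) :
    muR n m (r ∘ σ) = muR n m r := by
  unfold muR
  have h := (mp_permQ n m σ)
  conv_lhs => rw [← h.map_eq]
  rw [integral_map h.measurable.aemeasurable]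
  · refine integral_congr_ae (Filter.Eventually.of_forall fun ω => ?_)
    simp only
    rw [← matchingNumber_perm (adjR n r ω) σ]
    rfl
  · exact (meas_fun_adjR n _ (fun A => (matchingNumber A : ℝ))).aestronglyMeasurable

/-- resampling one coordinate -/
lemma mp_update (n : ℕ) (i : Fin n) :
    MeasurePreserving (fun p : (Fin n → ℝ) × ℝ => Function.update p.1 i p.2)
      ((PP n).prod nu) (PP n) := by
  have hmeas : Measurable (fun p : (Fin n → ℝ) × ℝ => Function.update p.1 i p.2) := by
    refine measurable_pi_iff.2 fun k => ?_
    by_cases h : k = i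
    · subst h; simpa using measurable_snd
    · simp only [Function.update_of_ne h]; fun_prop
  refine ⟨hmeas, ?_⟩
  unfold PP
  refine (Measure.pi_eq fun s hs => ?_).symm
  rw [Measure.map_apply hmeas (MeasurableSet.univ_pi hs)]
  have : (fun p : (Fin n → ℝ) × ℝ => Function.update p.1 i p.2) ⁻¹' Set.univ.pi s =
      (Set.univ.pi (Function.update s i Set.univ)) ×ˢ (s i) := by
    ext p
    simp only [Set.mem_preimage, Set.mem_univ_pi, Set.mem_prod]
    constructor
    · intro h
      refine ⟨fun k => ?_, by simpa using h i⟩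
      by_cases hk : k = i
      · subst hk; simp
      · simpa [Function.update_of_ne hk] using h k
    · rintro ⟨h, h'⟩ k
      by_cases hk : k = i
      · subst hk; simpa using h'
      · simpa [Function.update_of_ne hk] using h k
  rw [this, Measure.prod_prod, Measure.pi_pi]
  rw [← Finset.prod_erase_mul _ _ (Finset.mem_univ i),
    ← Finset.prod_erase_mul (Finset.univ) (fun k => nu (s k)) (Finset.mem_univ i)]
  simp only [Function.update_self, measure_univ, mul_one]
  congr 1
  refine Finset.prod_congr rfl fun k hk => ?_
  rw [Function.update_of_ne (Finset.ne_of_mem_erase hk)]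

lemma QQ_slice (n m : ℕ) (i : Fin n) (A : Set ((Fin n → ℝ) × (Fin m → ℝ)))
    (hA : MeasurableSet A) :
    QQ n m A = ∫⁻ ω, nu {s | (Function.update ω.1 i s, ω.2) ∈ A} ∂(QQ n m) := by
  have hmp : MeasurePreserving (fun p : ((Fin n → ℝ) × ℝ) × (Fin m → ℝ) =>
      (Function.update p.1.1 i p.1.2, p.2)) (((PP n).prod nu).prod (PP m)) (QQ n m) :=
    (mp_update n i).prod (MeasurePreserving.id _)
  have hA' := hmp.measurable hA
  have hu := (mp_update n i).measurable
  rw [← hmp.measure_preimage hA.nullMeasurableSet]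
  rw [← lintegral_indicator_one hA']
  have mI : Measurable ((fun p : ((Fin n → ℝ) × ℝ) × (Fin m → ℝ) =>
      (Function.update p.1.1 i p.1.2, p.2)) ⁻¹' A |>.indicator (1 : ((Fin n → ℝ) × ℝ) × (Fin m → ℝ) → ENNReal)) :=
    measurable_one.indicator hA'
  rw [lintegral_prod_symm _ mI.aemeasurable]
  have step : ∀ D : Fin m → ℝ, ∫⁻ p, ((fun p : ((Fin n → ℝ) × ℝ) × (Fin m → ℝ) =>
      (Function.update p.1.1 i p.1.2, p.2)) ⁻¹' A |>.indicator (1 : ((Fin n → ℝ) × ℝ) × (Fin m → ℝ) → ENNReal)) (p, D)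
        ∂((PP n).prod nu) =
      ∫⁻ S, nu {s | (Function.update S i s, D) ∈ A} ∂(PP n) := by
    intro D
    refine (lintegral_prod _ (mI.comp measurable_prodMk_right).aemeasurable).trans ?_
    refine lintegral_congr fun S => ?_
    have hS : MeasurableSet {s | (Function.update S i s, D) ∈ A} := by
      have : Measurable (fun s : ℝ => (Function.update S i s, D)) :=
        (hu.comp measurable_prodMk_left).prodMk measurable_const
      exact this hA
    rw [← lintegral_indicator_one hS]
    rfl
  simp_rw [step]
  have mS : Measurable (fun ω : (Fin n → ℝ) × (Fin m → ℝ) =>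
      nu {s | (Function.update ω.1 i s, ω.2) ∈ A}) := by
    have : Measurable (fun q : ((Fin n → ℝ) × (Fin m → ℝ)) × ℝ =>
        (Function.update q.1.1 i q.2, q.1.2)) :=
      (hu.comp ((measurable_fst.comp measurable_fst).prodMk measurable_snd)).prodMk
        (measurable_snd.comp measurable_fst)
    exact measurable_measure_prodMk_left (this hA)
  unfold QQ
  rw [lintegral_prod_symm _ mS.aemeasurable]

lemma ae_D (n m : ℕ) : ∀ᵐ ω ∂(QQ n m), ∀ d : Fin m, ω.2 d ∈ Set.Icc (0 : ℝ) 1 := by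
  rw [ae_all_iff]
  intro d
  have h1 : ∀ᵐ x ∂nu, x ∈ Set.Icc (0 : ℝ) 1 := ae_restrict_mem measurableSet_Icc
  have h2 : MeasurePreserving (fun ω : (Fin n → ℝ) × (Fin m → ℝ) => ω.2 d) (QQ n m) nu :=
    (measurePreserving_eval (fun _ : Fin m => nu) d).comp measurePreserving_snd
  exact h2.quasiMeasurePreserving.ae h1

lemma nu_Icc (a b : ℝ) (ha : 0 ≤ a) (hb : b ≤ 1) : nu (Set.Icc a b) = ENNReal.ofReal (b - a) := by
  unfold nu
  rw [Measure.restrict_apply measurableSet_Icc, Set.inter_eq_left.2 (Set.Icc_subset_Icc ha hb),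
    Real.volume_Icc]

lemma nu_Ico (a b : ℝ) (ha : 0 ≤ a) (hb : b ≤ 1) : nu (Set.Ico a b) = ENNReal.ofReal (b - a) := by
  unfold nu
  rw [Measure.restrict_apply measurableSet_Ico, Set.inter_eq_left.2, Real.volume_Ico]
  intro x hx
  exact ⟨ha.trans hx.1, hx.2.le.trans hb⟩

lemma nu_Ioc (a b : ℝ) (ha : 0 ≤ a) (hb : b ≤ 1) : nu (Set.Ioc a b) = ENNReal.ofReal (b - a) := by
  unfold nu
  rw [Measure.restrict_apply measurableSet_Ioc, Set.inter_eq_left.2, Real.volume_Ioc]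
  intro x hx
  exact ⟨ha.trans hx.1.le, hx.2.trans hb⟩

lemma nu_le_volume (A : Set ℝ) : nu A ≤ volume A := Measure.restrict_apply_le _ _


/-! ### Part C: concavity, occupancy -/

def XS {m : ℕ} (W : Finset (Fin m)) (D : Fin m → ℝ) (u v : ℝ) : Set ℝ :=
  {s | (∃ d ∈ W, |s - D d| ≤ v) ∧ ¬ ∃ d ∈ W, |s - D d| ≤ u}

def ES {m : ℕ} (W : Finset (Fin m)) (D : Fin m → ℝ) (y δ : ℝ) : Set ℝ :=
  {s | ∃ d ∈ W, y < s - D d ∧ s - D d ≤ y + δ ∧ (∀ d' ∈ W, s - D d ≤ |s - D d'|) ∧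
    ∃ d' ∈ W, y + δ < D d' - s ∧ D d' - s ≤ y + 2 * δ}

lemma ms_XS {m : ℕ} (W : Finset (Fin m)) (D : Fin m → ℝ) (u v : ℝ) : MeasurableSet (XS W D u v) := by
  apply measurableSet_setOfPred.2
  have h : ∀ v, Measurable (fun s => ∃ d ∈ W, |s - D d| ≤ v) := by
    intro v
    refine Measurable.exists fun d => Measurable.and measurable_const ?_
    apply measurableSet_setOfPred.1
    apply measurableSet_le <;> fun_prop
  exact (h v).and (h u).not

lemma ms_left {m : ℕ} (W : Finset (Fin m)) (D : Fin m → ℝ) :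
    MeasurableSet {s | ∃ d ∈ W, D d ≤ s ∧ ∀ d' ∈ W, s - D d ≤ |s - D d'|} := by
  apply measurableSet_setOfPred.2
  refine Measurable.exists fun d => Measurable.and measurable_const (Measurable.and ?_ ?_)
  · apply measurableSet_setOfPred.1
    apply measurableSet_le <;> fun_prop
  · refine Measurable.forall fun d' => Measurable.imp measurable_const ?_
    apply measurableSet_setOfPred.1
    apply measurableSet_le <;> fun_prop

lemma concavity {m : ℕ} (W : Finset (Fin m)) (D : Fin m → ℝ) (hD : ∀ d, D d ∈ Set.Icc (0 : ℝ) 1)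
    (x y δ : ℝ) (hy : 0 ≤ y) (hδ : 0 < δ) (hxy : y + δ ≤ x - δ) :
    nu (XS W D (x - δ) x) + nu (ES W D y δ) ≤ nu (XS W D y (y + δ)) := by
  set Δ := x - δ - y with hΔ
  set Lf : Set ℝ := {s | ∃ d ∈ W, D d ≤ s ∧ ∀ d' ∈ W, s - D d ≤ |s - D d'|} with hLf
  set I := Set.Icc (0 : ℝ) 1 with hI
  set X := XS W D (x - δ) x with hX
  have mX : MeasurableSet X := ms_XS _ _ _ _
  have mL : MeasurableSet Lf := ms_left W D
  set XL := X ∩ I ∩ Lf with hXL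
  set XR := (X ∩ I) \ Lf with hXR
  have mXL : MeasurableSet XL := (mX.inter measurableSet_Icc).inter mL
  have mXR : MeasurableSet XR := (mX.inter measurableSet_Icc).diff mL
  set XL' := (fun s : ℝ => s + Δ) ⁻¹' XL with hXL'
  set XR' := (fun s : ℝ => s + (-Δ)) ⁻¹' XR with hXR'
  have mXL' : MeasurableSet XL' := (measurable_add_const Δ) mXL
  have mXR' : MeasurableSet XR' := (measurable_add_const (-Δ)) mXR
  have vL : volume XL' = volume XL := measure_preimage_add_right volume Δ XL
  have vR : volume XR' = volume XR := measure_preimage_add_right volume (-Δ) XR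
  have hsum : volume (X ∩ I) = volume XL' + volume XR' := by
    rw [vL, vR]
    exact (measure_inter_add_sdiff (X ∩ I) mL).symm
  -- structure of XL'
  have fL : ∀ s ∈ XL', ∃ d ∈ W, y < s - D d ∧ s - D d ≤ y + δ ∧ s ∈ I ∧
      ∀ d' ∈ W, s + Δ - D d ≤ |s + Δ - D d'| ∧ x - δ < |s + Δ - D d'| := by
    rintro s ⟨⟨⟨⟨d1, hd1, h1⟩, h2⟩, h3⟩, ⟨d, hd, h4, h5⟩⟩
    have h3' : 0 ≤ s + Δ ∧ s + Δ ≤ 1 := h3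
    have h2' : ∀ d' ∈ W, x - δ < |s + Δ - D d'| := by
      intro d' hd'
      by_contra hc
      exact h2 ⟨d', hd', not_lt.1 hc⟩
    have e1 := h5 d1 hd1
    have e2 := h2' d hd
    simp only at h1 h4 e1
    rw [abs_of_nonneg (by linarith)] at e2
    refine ⟨d, hd, by linarith, by linarith, ⟨?_, by linarith⟩, fun d' hd' => ⟨h5 d' hd', h2' d' hd'⟩⟩
    have := (hD d).1
    linarith
  have fR : ∀ s ∈ XR', ∃ d ∈ W, y < D d - s ∧ D d - s ≤ y + δ ∧ s ∈ I ∧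
      ∀ d' ∈ W, D d - (s - Δ) ≤ |s - Δ - D d'| ∧ x - δ < |s - Δ - D d'| := by
    rintro s ⟨⟨⟨⟨d1, hd1, h1⟩, h2⟩, h3⟩, h4⟩
    have h3' : 0 ≤ s + -Δ ∧ s + -Δ ≤ 1 := h3
    have hs : s + -Δ = s - Δ := by ring
    simp only [hs] at h1 h2 h3' h4
    have h2' : ∀ d' ∈ W, x - δ < |s - Δ - D d'| := by
      intro d' hd'
      by_contra hc
      exact h2 ⟨d', hd', not_lt.1 hc⟩
    obtain ⟨d, hd, hmin⟩ := Finset.exists_min_image W (fun d => |s - Δ - D d|) ⟨d1, hd1⟩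
    have hlt : s - Δ < D d := by
      by_contra hc
      apply h4
      refine ⟨d, hd, not_lt.1 hc, ?_⟩
      intro d' hd'
      have := hmin d' hd'
      rwa [abs_of_nonneg (by linarith [not_lt.1 hc])] at this
    have hab : |s - Δ - D d| = D d - (s - Δ) := by
      rw [abs_of_nonpos (by linarith)]; ring
    rw [hab] at hmin
    have e1 := hmin d1 hd1
    have e2 := h2' d hd
    rw [hab] at e2
    have := (hD d).2
    exact ⟨d, hd, by linarith, by linarith, ⟨by linarith, by linarith⟩,
      fun d' hd' => ⟨hmin d' hd', h2' d' hd'⟩⟩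
  have sL : XL' ⊆ XS W D y (y + δ) ∩ I := by
    intro s hs
    obtain ⟨d, hd, h1, h2, h3, h4⟩ := fL s hs
    refine ⟨⟨⟨d, hd, ?_⟩, ?_⟩, h3⟩
    · rw [abs_of_nonneg (by linarith)]; exact h2
    · rintro ⟨d', hd', h⟩
      have := (h4 d' hd').2
      have h6 : |s + Δ - D d'| ≤ |s - D d'| + |Δ| := by
        have : s + Δ - D d' = (s - D d') + Δ := by ring
        rw [this]; exact abs_add_le _ _
      rw [abs_of_nonneg (by linarith : 0 ≤ Δ)] at h6
      linarith
  have sR : XR' ⊆ XS W D y (y + δ) ∩ I := by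
    intro s hs
    obtain ⟨d, hd, h1, h2, h3, h4⟩ := fR s hs
    refine ⟨⟨⟨d, hd, ?_⟩, ?_⟩, h3⟩
    · rw [abs_of_nonpos (by linarith)]; linarith
    · rintro ⟨d', hd', h⟩
      have := (h4 d' hd').2
      have h6 : |s - Δ - D d'| ≤ |s - D d'| + |Δ| := by
        have : s - Δ - D d' = (s - D d') - Δ := by ring
        rw [this]; exact abs_sub _ _
      rw [abs_of_nonneg (by linarith : 0 ≤ Δ)] at h6
      linarith
  have sE : ES W D y δ ∩ I ⊆ XS W D y (y + δ) ∩ I := by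
    rintro s ⟨⟨d, hd, h1, h2, h3, -⟩, hI⟩
    refine ⟨⟨⟨d, hd, ?_⟩, ?_⟩, hI⟩
    · rw [abs_of_nonneg (by linarith)]; exact h2
    · rintro ⟨d', hd', h⟩
      have := h3 d' hd'
      linarith
  have dLR : Disjoint XL' XR' := by
    rw [Set.disjoint_left]
    intro s hs hs'
    obtain ⟨d, hd, h1, h2, h3, h4⟩ := fL s hs
    obtain ⟨e, he, k1, k2, k3, k4⟩ := fR s hs'
    have a1 := (h4 e he).1
    have a2 := (k4 d hd).1
    rw [le_abs] at a1 a2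
    rcases a1 with a1 | a1 <;> rcases a2 with a2 | a2 <;> linarith
  have dLRE : Disjoint (ES W D y δ ∩ I) (XL' ∪ XR') := by
    rw [Set.disjoint_left]
    rintro s ⟨⟨d, hd, h1, h2, h3, e, he, h4, h5⟩, -⟩ (hs | hs)
    · obtain ⟨d2, hd2, k1, k2, k3, k4⟩ := fL s hs
      have a1 := (k4 e he).2
      rw [lt_abs] at a1
      rcases a1 with a1 | a1 <;> linarith
    · obtain ⟨d2, hd2, k1, k2, k3, k4⟩ := fR s hs
      have a1 := (k4 d hd).1
      have a2 := h3 d2 hd2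
      rw [abs_of_nonpos (by linarith)] at a2
      rw [le_abs] at a1
      rcases a1 with a1 | a1 <;> linarith
  have happ : ∀ A, nu A = volume (A ∩ I) := fun A => Measure.restrict_apply' measurableSet_Icc
  rw [happ, happ, happ, hsum, ← measure_union dLR mXR', add_comm,
    ← measure_union dLRE (mXL'.union mXR')]
  exact measure_mono (Set.union_subset sE (Set.union_subset sL sR))

lemma bern (a h : ℝ) (ha : 0 ≤ a) (hh : 0 ≤ h) (k : ℕ) :
    a ^ (k + 1) + (k + 1) * h * a ^ k ≤ (a + h) ^ (k + 1) := by
  induction k with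
  | zero => simp
  | succ k ih =>
    have h1 := mul_le_mul_of_nonneg_right ih (by positivity : 0 ≤ a + h)
    have h2 : 0 ≤ (k + 1 : ℝ) * h * h * a ^ k := by positivity
    push_cast
    calc _ ≤ (a ^ (k + 1) + (k + 1) * h * a ^ k) * (a + h) := by ring_nf; ring_nf at h2; linarith
      _ ≤ (a + h) ^ (k + 1) * (a + h) := h1
      _ = _ := by ring

lemma occupancy {κ : Type*} (w : ℝ) (hw : 0 ≤ w) (hw1 : w ≤ 1) (A : κ → Set ℝ)
    (hA : ∀ c, MeasurableSet (A c)) (m : ℕ) :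
    ∀ (T : Finset κ), (∀ c ∈ T, ∀ c' ∈ T, c ≠ c' → Disjoint (A c) (A c')) →
      (∀ c ∈ T, nu (A c) = ENNReal.ofReal w) →
    PP m {D | ∀ c ∈ T, ∃ d, D d ∈ A c} ≤ ENNReal.ofReal ((1 - (1 - w) ^ m) ^ T.card) := by
  have mset : ∀ (m : ℕ) (T : Finset κ), MeasurableSet {D : Fin m → ℝ | ∀ c ∈ T, ∃ d, D d ∈ A c} := by
    intro m T
    have : {D : Fin m → ℝ | ∀ c ∈ T, ∃ d, D d ∈ A c} = ⋂ c ∈ T, ⋃ d, {D | D d ∈ A c} := by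
      ext D; simp
    rw [this]
    refine Finset.measurableSet_biInter _ fun c _ => MeasurableSet.iUnion fun d => ?_
    exact (measurable_pi_apply d) (hA c)
  induction m with
  | zero =>
    intro T _ _
    rcases T.eq_empty_or_nonempty with rfl | ⟨c, hc⟩
    · simp
    · have : {D : Fin 0 → ℝ | ∀ c ∈ T, ∃ d, D d ∈ A c} = ∅ := by
        ext D
        simp only [Set.mem_ofPred_eq, Set.mem_empty_iff_false, iff_false]
        intro h
        obtain ⟨d, -⟩ := h c hc
        exact d.elim0
      rw [this]; simp
  | succ m ih =>
    intro T hdis hT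
    have hq0 : 0 ≤ 1 - (1 - w) ^ m := by
      have : (1 - w) ^ m ≤ 1 := pow_le_one₀ (by linarith) (by linarith)
      linarith
    have hq1 : 1 - (1 - w) ^ m ≤ 1 := by
      have : 0 ≤ (1 - w) ^ m := pow_nonneg (by linarith) _
      linarith
    set q := 1 - (1 - w) ^ m with hq
    have hq' : 1 - (1 - w) ^ (m + 1) = q + w * (1 - q) := by rw [hq]; ring
    rw [hq']
    have hmp := (measurePreserving_piFinSuccAbove (fun _ : Fin (m + 1) => nu) 0).symm
    have e1 : PP (m + 1) {D | ∀ c ∈ T, ∃ d, D d ∈ A c} =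
        ∫⁻ s, PP m {D | ∀ c ∈ T, s ∈ A c ∨ ∃ d, D d ∈ A c} ∂nu := by
      have := hmp.measure_preimage (mset (m + 1) T).nullMeasurableSet
      unfold PP
      rw [← this, Measure.prod_apply (hmp.measurable (mset (m + 1) T))]
      refine lintegral_congr fun s => ?_
      congr 1
      ext D
      simp only [Set.mem_preimage, Set.mem_ofPred_eq, Fin.exists_fin_succ]
      rfl
    rw [e1]
    obtain hk | ⟨k, hk⟩ : T.card = 0 ∨ ∃ k, T.card = k + 1 := by
      rcases hh : T.card with _ | k
      · exact Or.inl rfl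
      · exact Or.inr ⟨k, rfl⟩
    · rw [Finset.card_eq_zero] at hk
      subst hk
      simp
    rw [hk]
    have hpt : ∀ s, PP m {D | ∀ c ∈ T, s ∈ A c ∨ ∃ d, D d ∈ A c} ≤
        ENNReal.ofReal (q ^ (k + 1)) +
          ∑ c ∈ T, (A c).indicator (fun _ => ENNReal.ofReal (q ^ k - q ^ (k + 1))) s := by
      intro s
      by_cases hs : ∃ c ∈ T, s ∈ A c
      · obtain ⟨c, hc, hsc⟩ := hs
        have h1 : {D : Fin m → ℝ | ∀ c ∈ T, s ∈ A c ∨ ∃ d, D d ∈ A c} ⊆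
            {D | ∀ c1 ∈ T.erase c, ∃ d, D d ∈ A c1} := by
          intro D hD c' hc'
          rw [Finset.mem_erase] at hc'
          rcases hD c' hc'.2 with h | h
          · exact absurd h (Set.disjoint_left.1 (hdis c hc c' hc'.2 hc'.1.symm) hsc)
          · exact h
        have h2 := ih (T.erase c)
          (fun a ha b hb => hdis a (Finset.mem_of_mem_erase ha) b (Finset.mem_of_mem_erase hb))
          (fun a ha => hT a (Finset.mem_of_mem_erase ha))
        rw [Finset.card_erase_of_mem hc, hk, Nat.add_sub_cancel] at h2
        refine (measure_mono h1).trans (h2.trans ?_)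
        have h3 : (A c).indicator (fun _ => ENNReal.ofReal (q ^ k - q ^ (k + 1))) s ≤
            ∑ c ∈ T, (A c).indicator (fun _ => ENNReal.ofReal (q ^ k - q ^ (k + 1))) s :=
          Finset.single_le_sum (f := fun c => (A c).indicator
            (fun _ => ENNReal.ofReal (q ^ k - q ^ (k + 1))) s) (fun _ _ => zero_le) hc
        rw [Set.indicator_of_mem hsc] at h3
        refine le_trans ?_ (add_le_add_right h3 _)
        rw [← ENNReal.ofReal_add (by positivity)]
        · apply ENNReal.ofReal_le_ofReal; linarith
        · have := pow_le_pow_of_le_one hq0 hq1 (Nat.le_succ k)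
          simp only [Nat.succ_eq_add_one] at this
          linarith
      · push Not at hs
        have h1 : {D : Fin m → ℝ | ∀ c ∈ T, s ∈ A c ∨ ∃ d, D d ∈ A c} ⊆
            {D | ∀ c ∈ T, ∃ d, D d ∈ A c} := by
          intro D hD c' hc'
          rcases hD c' hc' with h | h
          · exact absurd h (hs c' hc')
          · exact h
        have h2 := ih T hdis hT
        rw [hk] at h2
        exact ((measure_mono h1).trans h2).trans (le_add_right le_rfl)
    refine (lintegral_mono hpt).trans ?_
    have hnn : 0 ≤ q ^ k - q ^ (k + 1) := by
      have := pow_le_pow_of_le_one hq0 hq1 (Nat.le_succ k)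
      simp only [Nat.succ_eq_add_one] at this
      linarith
    rw [lintegral_add_left measurable_const, lintegral_const, measure_univ, mul_one,
      lintegral_finsetSum _ (fun c _ => measurable_const.indicator (hA c))]
    have h4 : ∀ c ∈ T, ∫⁻ s, (A c).indicator (fun _ => ENNReal.ofReal (q ^ k - q ^ (k + 1))) s ∂nu =
        ENNReal.ofReal (q ^ k - q ^ (k + 1)) * ENNReal.ofReal w := by
      intro c hc
      rw [lintegral_indicator_const (hA c), hT c hc]
    rw [Finset.sum_congr rfl h4, Finset.sum_const, hk, nsmul_eq_mul, ← ENNReal.ofReal_mul hnn,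
      ← ENNReal.ofReal_natCast, ← ENNReal.ofReal_mul (by positivity),
      ← ENNReal.ofReal_add (by positivity) (by positivity)]
    apply ENNReal.ofReal_le_ofReal
    have := bern q (w * (1 - q)) hq0 (mul_nonneg hw (by linarith)) k
    push_cast
    refine le_trans (le_of_eq ?_) this
    ring


/-! ### Part D: the transfer step -/

lemma QQ_slice' (n m : ℕ) (i : Fin n) (A : Set ((Fin n → ℝ) × (Fin m → ℝ)))
    (hA : MeasurableSet A) :
    QQ n m A = ∫⁻ s, QQ n m {ω | (Function.update ω.1 i s, ω.2) ∈ A} ∂nu := by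
  have hu := (mp_update n i).measurable
  have hmeas : Measurable (fun q : ((Fin n → ℝ) × (Fin m → ℝ)) × ℝ =>
        (Function.update q.1.1 i q.2, q.1.2)) :=
      (hu.comp ((measurable_fst.comp measurable_fst).prodMk measurable_snd)).prodMk
        (measurable_snd.comp measurable_fst)
  rw [QQ_slice n m i A hA]
  have h1 := Measure.prod_apply (μ := QQ n m) (ν := nu) (hmeas hA)
  have h2 := Measure.prod_apply_symm (μ := QQ n m) (ν := nu) (hmeas hA)
  exact h1.symm.trans h2

def Ev {n m : ℕ} (i : Fin n) (y δ H : ℝ) (p : Fin m × Fin m) : Set ((Fin n → ℝ) × (Fin m → ℝ)) :=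
  {ω | ω.1 i ∈ Set.Icc (1 / 4 : ℝ) (3 / 4) ∧
    (y < ω.1 i - ω.2 p.1 ∧ ω.1 i - ω.2 p.1 ≤ y + δ) ∧
    (y + δ < ω.2 p.2 - ω.1 i ∧ ω.2 p.2 - ω.1 i ≤ y + 2 * δ) ∧
    (∀ d, d ≠ p.1 → d ≠ p.2 → 2 * H < |ω.1 i - ω.2 d|) ∧
    (∀ k, k ≠ i → 2 * H < |ω.1 i - ω.1 k|)}

lemma ms_Ev {n m : ℕ} (i : Fin n) (y δ H : ℝ) (p : Fin m × Fin m) :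
    MeasurableSet (Ev i y δ H p) := by
  apply measurableSet_setOfPred.2
  have hm : ∀ {f g : (Fin n → ℝ) × (Fin m → ℝ) → ℝ}, Measurable f → Measurable g →
      Measurable (fun ω => f ω ≤ g ω) := fun hf hg => measurableSet_setOfPred.1 (measurableSet_le hf hg)
  have hm' : ∀ {f g : (Fin n → ℝ) × (Fin m → ℝ) → ℝ}, Measurable f → Measurable g →
      Measurable (fun ω => f ω < g ω) := fun hf hg => measurableSet_setOfPred.1 (measurableSet_lt hf hg)
  refine Measurable.and ?_ (Measurable.and (Measurable.and ?_ ?_) (Measurable.and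
    (Measurable.and ?_ ?_) (Measurable.and ?_ ?_)))
  · exact (hm (by fun_prop) (by fun_prop)).and (hm (by fun_prop) (by fun_prop))
  · exact hm' (by fun_prop) (by fun_prop)
  · exact hm (by fun_prop) (by fun_prop)
  · exact hm' (by fun_prop) (by fun_prop)
  · exact hm (by fun_prop) (by fun_prop)
  · exact Measurable.forall fun d => Measurable.imp measurable_const (Measurable.imp measurable_const
      (hm' (by fun_prop) (by fun_prop)))
  · exact Measurable.forall fun d => Measurable.imp measurable_const
      (hm' (by fun_prop) (by fun_prop))

lemma nu_far (s H : ℝ) (hH : 0 ≤ H) : ENNReal.ofReal (1 - 4 * H) ≤ nu {t | 2 * H < |s - t|} := by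
  have h1 : {t : ℝ | 2 * H < |s - t|} = (Set.Icc (s - 2 * H) (s + 2 * H))ᶜ := by
    ext t
    simp only [Set.mem_ofPred_eq, Set.mem_compl_iff, Set.mem_Icc, lt_abs, not_and_or, not_le]
    constructor
    · rintro (h | h)
      · left; linarith
      · right; linarith
    · rintro (h | h)
      · left; linarith
      · right; linarith
  rw [h1, prob_compl_eq_one_sub measurableSet_Icc, ENNReal.ofReal_sub _ (by positivity),
    ENNReal.ofReal_one]
  apply tsub_le_tsub_left
  refine (nu_le_volume _).trans ?_
  rw [Real.volume_Icc]
  apply ENNReal.ofReal_le_ofReal; linarith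

lemma Ev_lower {n m : ℕ} (i : Fin n) (y δ H : ℝ) (hy : 0 ≤ y) (hδ : 0 ≤ δ) (hH : y + 2 * δ ≤ H)
    (hH' : H ≤ 1 / 16) (p : Fin m × Fin m) (hp : p.1 ≠ p.2) :
    ENNReal.ofReal (1 / 2 * δ ^ 2 * (1 - 4 * H) ^ (n + m)) ≤ QQ n m (Ev i y δ H p) := by
  obtain ⟨a, b⟩ := p
  simp only at hp
  have hH0 : 0 ≤ H := by linarith
  rw [QQ_slice' n m i _ (ms_Ev i y δ H _)]
  set q := ENNReal.ofReal (1 - 4 * H) with hq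
  have hq1 : q ≤ 1 := by
    rw [hq, ← ENNReal.ofReal_one]; apply ENNReal.ofReal_le_ofReal; linarith
  have key : ∀ s ∈ Set.Icc (1 / 4 : ℝ) (3 / 4), q ^ n * (ENNReal.ofReal δ * ENNReal.ofReal δ * q ^ m) ≤
      QQ n m {ω | (Function.update ω.1 i s, ω.2) ∈ Ev i y δ H (a, b)} := by
    intro s hs
    have hsub : (Set.univ.pi (fun _ : Fin n => {t : ℝ | 2 * H < |s - t|})) ×ˢ
        (Set.univ.pi (fun d : Fin m => if d = a then Set.Ico (s - y - δ) (s - y) else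
          if d = b then Set.Ioc (s + y + δ) (s + y + 2 * δ) else {t : ℝ | 2 * H < |s - t|})) ⊆
        {ω | (Function.update ω.1 i s, ω.2) ∈ Ev i y δ H (a, b)} := by
      rintro ⟨S, D⟩ ⟨hS, hD⟩
      simp only [Set.mem_univ_pi] at hS hD
      have ha := hD a
      have hb := hD b
      simp only [if_true, if_neg hp.symm, Set.mem_Ico, Set.mem_Ioc] at ha hb
      refine ⟨by simpa using hs, ?_, ?_, ?_, ?_⟩
      · simp only [Function.update_self]; constructor <;> linarith
      · simp only [Function.update_self]; constructor <;> linarith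
      · intro d hda hdb
        have := hD d
        simp only at hda hdb
        simp only [if_neg hda, if_neg hdb] at this
        simpa using this
      · intro k hk
        simpa [Function.update_of_ne hk] using hS k
    refine le_trans ?_ (measure_mono hsub)
    unfold QQ
    rw [Measure.prod_prod]
    apply mul_le_mul' 
    · unfold PP
      rw [Measure.pi_pi]
      have : q ^ n = ∏ _k : Fin n, q := by simp
      rw [this]
      exact Finset.prod_le_prod' fun k _ => nu_far s H hH0
    · unfold PP
      rw [Measure.pi_pi]
      have : ENNReal.ofReal δ * ENNReal.ofReal δ * q ^ m = ∏ d : Fin m,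
          ((if d = a then ENNReal.ofReal δ else 1) * (if d = b then ENNReal.ofReal δ else 1) * q) := by
        rw [Finset.prod_mul_distrib, Finset.prod_mul_distrib]
        simp
      rw [this]
      refine Finset.prod_le_prod' fun d _ => ?_
      by_cases hda : d = a
      · subst hda
        simp only [if_true, if_neg hp]
        rw [nu_Ico _ _ (by linarith [hs.1]) (by linarith [hs.2])]
        have : s - y - (s - y - δ) = δ := by ring
        rw [this, mul_one]
        exact mul_le_of_le_one_right' hq1
      · by_cases hdb : d = b
        · subst hdb
          simp only [if_true, if_neg hda]
          rw [nu_Ioc _ _ (by linarith [hs.1]) (by linarith [hs.2])]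
          have : s + y + 2 * δ - (s + y + δ) = δ := by ring
          rw [this, one_mul]
          exact mul_le_of_le_one_right' hq1
        · simp only [if_neg hda, if_neg hdb, one_mul]
          exact nu_far s H hH0
  calc ENNReal.ofReal (1 / 2 * δ ^ 2 * (1 - 4 * H) ^ (n + m))
      = (q ^ n * (ENNReal.ofReal δ * ENNReal.ofReal δ * q ^ m)) * nu (Set.Icc (1 / 4 : ℝ) (3 / 4)) := by
        rw [nu_Icc _ _ (by norm_num) (by norm_num), hq, ← ENNReal.ofReal_pow (by linarith),
          ← ENNReal.ofReal_pow (by linarith), ← ENNReal.ofReal_mul hδ, ← ENNReal.ofReal_mul (by positivity),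
          ← ENNReal.ofReal_mul (pow_nonneg (by linarith) _), ← ENNReal.ofReal_mul]
        · congr 1; ring
        · have : 0 ≤ 1 - 4 * H := by linarith
          positivity
    _ = ∫⁻ _s in Set.Icc (1 / 4 : ℝ) (3 / 4), q ^ n * (ENNReal.ofReal δ * ENNReal.ofReal δ * q ^ m) ∂nu := by
        rw [setLIntegral_const]
    _ ≤ ∫⁻ s in Set.Icc (1 / 4 : ℝ) (3 / 4),
          QQ n m {ω | (Function.update ω.1 i s, ω.2) ∈ Ev i y δ H (a, b)} ∂nu :=
        setLIntegral_mono' measurableSet_Icc key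
    _ ≤ _ := setLIntegral_le_lintegral _ _

lemma Ev_union_lower {n m : ℕ} (i : Fin n) (y δ H : ℝ) (hy : 0 ≤ y) (hδ : 0 ≤ δ)
    (hH : y + 2 * δ ≤ H) (hH' : H ≤ 1 / 16) :
    ENNReal.ofReal ((m * m - m : ℝ) * (1 / 2 * δ ^ 2 * (1 - 4 * H) ^ (n + m))) ≤
      QQ n m (⋃ p ∈ (Finset.univ : Finset (Fin m)).offDiag, Ev i y δ H p) := by
  rw [measure_biUnion_finset]
  · refine le_trans ?_ (Finset.sum_le_sum (f := fun _ => ENNReal.ofReal (1 / 2 * δ ^ 2 * (1 - 4 * H) ^ (n + m)))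
      fun p hp => ?_)
    · rw [Finset.sum_const, Finset.offDiag_card, nsmul_eq_mul, ← ENNReal.ofReal_natCast,
        ← ENNReal.ofReal_mul (by positivity)]
      apply ENNReal.ofReal_le_ofReal
      simp only [Finset.card_univ, Fintype.card_fin]
      rw [Nat.cast_sub (Nat.le_mul_self m)]
      push_cast
      exact le_rfl
    · rw [Finset.mem_offDiag] at hp
      exact Ev_lower i y δ H hy hδ hH hH' p hp.2.2
  · rintro ⟨a, b⟩ hp ⟨a', b'⟩ hp' hne
    rw [Function.onFun, Set.disjoint_left]
    rintro ω ⟨h1, h2, h3, h4, -⟩ ⟨k1, k2, k3, k4, -⟩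
    simp only at h2 h3 h4 k2 k3 k4
    have ea : a' = a := by
      by_contra hc
      by_cases hb : a' = b
      · subst hb; linarith [h3.1, k2.1]
      · have := h4 a' hc hb
        rw [abs_of_nonneg (by linarith)] at this
        linarith [k2.2]
    have eb : b' = b := by
      by_contra hc
      by_cases hb : b' = a
      · subst hb; linarith [k3.1, h2.1]
      · have := h4 b' hb hc
        rw [abs_of_nonpos (by linarith [k3.1])] at this
        linarith [k3.2]
    exact hne (by rw [ea, eb])
  · intro p _
    exact ms_Ev i y δ H p

def NB {n m : ℕ} (i j : Fin n) (t : ℕ) (w : ℝ) : Set ((Fin n → ℝ) × (Fin m → ℝ)) :=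
  {ω | |ω.1 i - ω.1 j| < t * w} ∪ {ω | t * w ≤ |ω.1 i - ω.1 j| ∧ ∀ c ∈ Finset.range t, ∃ d,
    ω.2 d ∈ Set.Ico (min (ω.1 i) (ω.1 j) + c * w) (min (ω.1 i) (ω.1 j) + (c + 1) * w)}

lemma ms_NB1 {n m : ℕ} (i j : Fin n) (t : ℕ) (w : ℝ) :
    MeasurableSet {ω : (Fin n → ℝ) × (Fin m → ℝ) | |ω.1 i - ω.1 j| < t * w} := by
  apply measurableSet_lt <;> fun_prop

lemma ms_NB2 {n m : ℕ} (i j : Fin n) (t : ℕ) (w : ℝ) :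
    MeasurableSet {ω : (Fin n → ℝ) × (Fin m → ℝ) | t * w ≤ |ω.1 i - ω.1 j| ∧
      ∀ c ∈ Finset.range t, ∃ d,
      ω.2 d ∈ Set.Ico (min (ω.1 i) (ω.1 j) + c * w) (min (ω.1 i) (ω.1 j) + (c + 1) * w)} := by
  apply measurableSet_setOfPred.2
  refine Measurable.and (measurableSet_setOfPred.1 (measurableSet_le (by fun_prop) (by fun_prop))) ?_
  refine Measurable.forall fun c => Measurable.imp measurable_const (Measurable.exists fun d => ?_)
  refine Measurable.and (measurableSet_setOfPred.1 (measurableSet_le (by fun_prop) (by fun_prop)))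
    (measurableSet_setOfPred.1 (measurableSet_lt (by fun_prop) (by fun_prop)))

lemma ms_NB {n m : ℕ} (i j : Fin n) (t : ℕ) (w : ℝ) :
    MeasurableSet (NB (m := m) i j t w) := (ms_NB1 i j t w).union (ms_NB2 i j t w)

lemma NB_upper {n m : ℕ} (i j : Fin n) (hij : i ≠ j) (t : ℕ) (w : ℝ) (hw : 0 ≤ w) (hw1 : w ≤ 1) :
    QQ n m (NB i j t w) ≤ ENNReal.ofReal (2 * (t * w) + (1 - (1 - w) ^ m) ^ t) := by
  have hq0 : 0 ≤ 1 - (1 - w) ^ m := by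
    have : (1 - w) ^ m ≤ 1 := pow_le_one₀ (by linarith) (by linarith)
    linarith
  rw [ENNReal.ofReal_add (by positivity) (by positivity)]
  refine (measure_union_le _ _).trans (add_le_add ?_ ?_)
  · rw [QQ_slice n m i _ (ms_NB1 i j t w)]
    have : ∀ ω : (Fin n → ℝ) × (Fin m → ℝ), nu {s | (Function.update ω.1 i s, ω.2) ∈
        {ω : (Fin n → ℝ) × (Fin m → ℝ) | |ω.1 i - ω.1 j| < t * w}} ≤ ENNReal.ofReal (2 * (t * w)) := by
      intro ω
      refine (nu_le_volume _).trans ?_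
      have h2 : {s | (Function.update ω.1 i s, ω.2) ∈
        {ω : (Fin n → ℝ) × (Fin m → ℝ) | |ω.1 i - ω.1 j| < t * w}} =
          Metric.ball (ω.1 j) (t * w) := by
        ext s
        simp [Function.update_of_ne hij.symm, Metric.mem_ball, Real.dist_eq]
      rw [h2, Real.volume_ball]
    refine (lintegral_mono this).trans ?_
    simp
  · unfold QQ
    rw [Measure.prod_apply (ms_NB2 i j t w)]
    have hae : ∀ᵐ S ∂(PP n), S i ∈ Set.Icc (0 : ℝ) 1 ∧ S j ∈ Set.Icc (0 : ℝ) 1 := by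
      have h1 : ∀ᵐ x ∂nu, x ∈ Set.Icc (0 : ℝ) 1 := ae_restrict_mem measurableSet_Icc
      have h2 : ∀ k, MeasurePreserving (fun S : Fin n → ℝ => S k) (PP n) nu :=
        fun k => measurePreserving_eval (fun _ : Fin n => nu) k
      filter_upwards [(h2 i).quasiMeasurePreserving.ae h1, (h2 j).quasiMeasurePreserving.ae h1]
        with S h h'
      exact ⟨h, h'⟩
    have hb : ∀ᵐ S ∂(PP n), PP m (Prod.mk S ⁻¹' {ω : (Fin n → ℝ) × (Fin m → ℝ) |
        t * w ≤ |ω.1 i - ω.1 j| ∧ ∀ c ∈ Finset.range t, ∃ d,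
        ω.2 d ∈ Set.Ico (min (ω.1 i) (ω.1 j) + c * w) (min (ω.1 i) (ω.1 j) + (c + 1) * w)}) ≤
        ENNReal.ofReal ((1 - (1 - w) ^ m) ^ t) := by
      filter_upwards [hae] with S hS
      by_cases hc : t * w ≤ |S i - S j|
      · have hocc := occupancy w hw hw1
          (fun c : ℕ => Set.Ico (min (S i) (S j) + c * w) (min (S i) (S j) + (c + 1) * w))
          (fun c => measurableSet_Ico) m (Finset.range t) ?_ ?_
        · rw [Finset.card_range] at hocc
          refine le_trans (measure_mono ?_) hocc
          rintro D ⟨-, hD⟩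
          exact hD
        · intro c _ c' _ hcc
          rw [Set.disjoint_left]
          rintro z ⟨h1, h2⟩ ⟨h3, h4⟩
          rcases lt_or_gt_of_ne hcc with h | h
          · have h5 : (c : ℝ) + 1 ≤ c' := by exact_mod_cast h
            have := mul_le_mul_of_nonneg_right h5 hw
            linarith
          · have h5 : (c' : ℝ) + 1 ≤ c := by exact_mod_cast h
            have := mul_le_mul_of_nonneg_right h5 hw
            linarith
        · intro c hct
          rw [Finset.mem_range] at hct
          have h5 : (c : ℝ) + 1 ≤ t := by exact_mod_cast hct
          have h6 := mul_le_mul_of_nonneg_right h5 hw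
          have h7 : min (S i) (S j) + |S i - S j| ≤ 1 := by
            rcases le_total (S i) (S j) with h | h
            · rw [min_eq_left h, abs_of_nonpos (by linarith)]; linarith [hS.2.2]
            · rw [min_eq_right h, abs_of_nonneg (by linarith)]; linarith [hS.1.2]
          have h8 : 0 ≤ min (S i) (S j) := le_min hS.1.1 hS.2.1
          rw [nu_Ico _ _ (by positivity) (by linarith)]
          congr 1; ring
      · have : (Prod.mk S ⁻¹' {ω : (Fin n → ℝ) × (Fin m → ℝ) |
          t * w ≤ |ω.1 i - ω.1 j| ∧ ∀ c ∈ Finset.range t, ∃ d,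
          ω.2 d ∈ Set.Ico (min (ω.1 i) (ω.1 j) + c * w) (min (ω.1 i) (ω.1 j) + (c + 1) * w)}) = ∅ := by
          ext D
          simp only [Set.mem_preimage, Set.mem_ofPred_eq, Set.mem_empty_iff_false, iff_false]
          exact fun h => hc h.1
        rw [this]; simp
    refine (lintegral_mono_ae hb).trans ?_
    simp


/-! ### Part E: the single transfer step -/

lemma adj0_congr {a b : ℕ} (nn : ℕ) (i j : Fin a) (r r' : Fin a → ℝ)
    (ω ω' : (Fin a → ℝ) × (Fin b → ℝ)) (hr : ∀ k, k ≠ i → k ≠ j → r k = r' k)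
    (h1 : ∀ k, k ≠ i → k ≠ j → ω.1 k = ω'.1 k) (h2 : ω.2 = ω'.2) :
    adj0 i j (adjR nn r ω) = adj0 i j (adjR nn r' ω') := by
  funext k d
  unfold adj0 adjR
  by_cases hki : k = i
  · simp [hki]
  by_cases hkj : k = j
  · simp [hkj]
  rw [hr k hki hkj, h1 k hki hkj, h2]

/-- the minimal tight set of demands after removing supplies `i`, `j` -/
def Wr {a b : ℕ} (nn : ℕ) (i j : Fin a) (r : Fin a → ℝ) (ω : (Fin a → ℝ) × (Fin b → ℝ)) :
    Finset (Fin b) := Wf (adj0 i j (adjR nn r ω))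

def XE {a b : ℕ} (nn : ℕ) (i j k : Fin a) (r : Fin a → ℝ) (u v : ℝ) :
    Set ((Fin a → ℝ) × (Fin b → ℝ)) := {ω | ω.1 k ∈ XS (Wr nn i j r ω) ω.2 u v}

lemma ms_XE {a b : ℕ} (nn : ℕ) (i j k : Fin a) (r : Fin a → ℝ) (u v : ℝ) :
    MeasurableSet (XE (b := b) nn i j k r u v) := by
  apply measurableSet_setOfPred.2
  have h : ∀ v, Measurable (fun ω : (Fin a → ℝ) × (Fin b → ℝ) =>
      ∃ d ∈ Wr nn i j r ω, |ω.1 k - ω.2 d| ≤ v) := by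
    intro v
    refine Measurable.exists fun d => Measurable.and ?_ ?_
    · exact meas_fun_adjR nn r (fun A => d ∈ Wf (adj0 i j A))
    · apply measurableSet_setOfPred.1
      apply measurableSet_le <;> fun_prop
  exact (h v).and (h u).not

lemma XE_swap (n m : ℕ) (nn : ℕ) (i j : Fin n) (r : Fin n → ℝ) (u v : ℝ) :
    QQ n m (XE nn i j j r u v) = QQ n m (XE nn i j i r u v) := by
  have h := mp_permQ n m (Equiv.swap i j)
  rw [← h.measure_preimage (ms_XE nn i j j r u v).nullMeasurableSet]
  congr 1
  ext ω
  simp only [XE, Set.mem_preimage, Set.mem_ofPred_eq, Equiv.swap_apply_right]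
  have : Wr nn i j r ((fun k => ω.1 (Equiv.swap i j k)), ω.2) = Wr nn i j r ω := by
    unfold Wr
    exact congrArg Wf (adj0_congr nn i j r r _ ω (fun _ _ _ => rfl) (fun k h1 h2 => by
      simp [Equiv.swap_apply_of_ne_of_ne h1 h2]) rfl)
  rw [this]

lemma XE_concave (n m : ℕ) (i j : Fin n) (r : Fin n → ℝ) (x y δ H : ℝ) (hy : 0 ≤ y)
    (hδ : 0 < δ) (hxy : y + δ ≤ x - δ) (hxH : x ≤ H) (hr : ∀ k, r k / n ≤ H) :
    QQ n m (XE n i j i r (x - δ) x) + QQ n m (⋃ p ∈ (Finset.univ : Finset (Fin m)).offDiag,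
      Ev i y δ H p) ≤ QQ n m (XE n i j i r y (y + δ)) := by
  have hmU : MeasurableSet (⋃ p ∈ (Finset.univ : Finset (Fin m)).offDiag,
      Ev (n := n) i y δ H p) := Finset.measurableSet_biUnion _ fun p _ => ms_Ev i y δ H p
  rw [QQ_slice n m i _ (ms_XE n i j i r (x - δ) x), QQ_slice n m i _ hmU,
    QQ_slice n m i _ (ms_XE n i j i r y (y + δ))]
  refine (le_lintegral_add _ _).trans ?_
  refine lintegral_mono_ae ?_
  filter_upwards [ae_D n m] with ω hω
  have hW : ∀ s, Wr n i j r (Function.update ω.1 i s, ω.2) = Wr n i j r ω := by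
    intro s
    unfold Wr
    exact congrArg Wf (adj0_congr n i j r r _ ω (fun _ _ _ => rfl)
      (fun k h1 h2 => by simp [h1]) rfl)
  have hX : ∀ u v, {s | (Function.update ω.1 i s, ω.2) ∈ XE n i j i r u v} =
      XS (Wr n i j r ω) ω.2 u v := by
    intro u v
    ext s
    simp [XE, hW]
  simp only [hX]
  refine le_trans (add_le_add le_rfl (measure_mono ?_))
    (concavity (Wr n i j r ω) ω.2 hω x y δ hy hδ hxy)
  intro s hs
  simp only [Set.mem_ofPred_eq, Set.mem_iUnion] at hs
  obtain ⟨⟨a, b⟩, -, hs⟩ := hs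
  unfold Ev at hs
  simp only [Set.mem_ofPred_eq, Function.update_self] at hs
  obtain ⟨-, ⟨ha1, ha2⟩, ⟨hb1, hb2⟩, hd, hk⟩ := hs
  have hin : ∀ d, |s - ω.2 d| ≤ H → d ∈ Wr n i j r ω := by
    intro d hdH
    apply isolated_mem_Wf
    rintro k ⟨hki, hkj, hkd⟩
    unfold adjR at hkd
    have h1 := hk k hki
    rw [Function.update_of_ne hki] at h1
    have h2 := hr k
    have h3 : |s - ω.1 k| ≤ |s - ω.2 d| + |ω.1 k - ω.2 d| := by
      rw [abs_sub_comm (ω.1 k)]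
      exact abs_sub_le _ _ _
    linarith
  refine ⟨a, hin a ?_, ha1, ha2, ?_, b, hin b ?_, hb1, hb2⟩
  · rw [abs_of_nonneg (by linarith)]; linarith
  · intro d' _
    by_cases h1 : d' = a
    · subst h1; exact le_abs_self _
    by_cases h2 : d' = b
    · subst h2
      rw [abs_sub_comm]
      exact le_trans (by linarith) (le_abs_self _)
    have := hd d' h1 h2
    linarith
  · rw [abs_sub_comm, abs_of_nonneg (by linarith)]; linarith

lemma arith_step (P P' R R' B X Y : Prop) [Decidable P] [Decidable P'] [Decidable R]
    [Decidable R'] [Decidable B] [Decidable X] [Decidable Y] (A A' Z : ℕ)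
    (hX : X ↔ P ∧ ¬ P') (hY : Y ↔ R' ∧ ¬ R) (hP : P' → P) (hR : R → R')
    (hup : A ≤ Z + (if P then 1 else 0) + (if R then 1 else 0)) (h0 : Z ≤ A')
    (hlo : ¬ B → Z + (if P' then 1 else 0) + (if R' then 1 else 0) ≤ A') :
    (A : ℝ) + (if Y then 1 else 0) ≤ A' + (if X then 1 else 0) + 2 * (if B then 1 else 0) := by
  have key : (A : ℤ) + (if Y then 1 else 0) ≤ A' + (if X then 1 else 0) +
      2 * (if B then 1 else 0) := by
    by_cases hB : B
    · clear hlo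
      by_cases hP : P <;> by_cases hP' : P' <;> by_cases hR : R <;> by_cases hR' : R' <;>
        simp_all <;> omega
    · replace hlo := hlo hB
      by_cases hP : P <;> by_cases hP' : P' <;> by_cases hR : R <;> by_cases hR' : R' <;>
        simp_all <;> omega
  exact_mod_cast key

lemma pointwise_step {n m : ℕ} (i j : Fin n) (hij : i ≠ j) (r r' : Fin n → ℝ) (x y δ H : ℝ)
    (hδ : 0 ≤ δ) (hH : 0 < H) (hr' : ∀ k, r' k / n ≤ H)
    (hoff : ∀ k, k ≠ i → k ≠ j → r k = r' k) (hi : r i / n = x) (hj : r j / n = y)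
    (hi' : r' i / n = x - δ) (hj' : r' j / n = y + δ) (t : ℕ)
    (ω : (Fin n → ℝ) × (Fin m → ℝ)) :
    (matchingNumber (adjR n r ω) : ℝ) + (XE n i j j r y (y + δ)).indicator (fun _ => (1 : ℝ)) ω ≤
      matchingNumber (adjR n r' ω) + (XE n i j i r (x - δ) x).indicator (fun _ => (1 : ℝ)) ω
      + 2 * (NB i j t (2 * H)).indicator (fun _ => (1 : ℝ)) ω := by
  have hW : adj0 i j (adjR n r' ω) = adj0 i j (adjR n r ω) :=
    (adj0_congr n i j r r' ω ω hoff (fun _ _ _ => rfl) rfl).symm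
  have hup := matching_upper i j hij (adjR n r ω)
  have hlo0 := matching_lower0 i j hij (adjR n r' ω)
  have hg : ω ∉ NB i j t (2 * H) → ∃ L : Fin m → Prop,
      (∀ k d d', adjR n r' ω k d → adjR n r' ω k d' → L d → L d') ∧
      (∀ d, adjR n r' ω i d → L d) ∧ (∀ d, adjR n r' ω j d → ¬ L d) := by
    intro hNB
    unfold NB at hNB
    simp only [Set.mem_union, Set.mem_ofPred_eq, not_or, not_and, not_forall, not_lt] at hNB
    obtain ⟨h1, h2⟩ := hNB
    obtain ⟨c, hc, hcd⟩ := h2 h1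
    simp only [not_exists, Set.mem_Ico, not_and, not_lt] at hcd
    have hct : ((c : ℝ) + 1) ≤ t := by
      have := Finset.mem_range.1 hc
      exact_mod_cast this
    have hc0 : (0 : ℝ) ≤ c := Nat.cast_nonneg c
    have hct' : ((c : ℝ) + 1) * (2 * H) ≤ t * (2 * H) :=
      mul_le_mul_of_nonneg_right hct (by linarith)
    have hc0' : (0 : ℝ) ≤ c * (2 * H) := by positivity
    rcases le_total (ω.1 i) (ω.1 j) with hle | hle
    · rw [min_eq_left hle] at hcd
      rw [abs_of_nonpos (by linarith)] at h1
      refine ⟨fun d => ω.2 d < ω.1 i + c * (2 * H), ?_, ?_, ?_⟩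
      · intro k d d' hd hd' hL
        by_contra hcon
        have h3 := hcd d' (not_lt.1 hcon)
        unfold adjR at hd hd'
        rw [abs_le] at hd hd'
        have := hr' k
        linarith
      · intro d hd
        by_contra hcon
        have h3 := hcd d (not_lt.1 hcon)
        unfold adjR at hd
        rw [abs_le] at hd
        have := hr' i
        linarith
      · intro d hd hL
        unfold adjR at hd
        rw [abs_le] at hd
        have := hr' j
        linarith
    · rw [min_eq_right hle] at hcd
      rw [abs_of_nonneg (by linarith)] at h1
      refine ⟨fun d => ω.1 j + c * (2 * H) ≤ ω.2 d, ?_, ?_, ?_⟩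
      · intro k d d' hd hd' hL
        by_contra hcon
        have h3 := hcd d hL
        unfold adjR at hd hd'
        rw [abs_le] at hd hd'
        have := hr' k
        linarith
      · intro d hd
        unfold adjR at hd
        rw [abs_le] at hd
        have := hr' i
        show _ ≤ _
        linarith
      · intro d hd hL
        have h3 := hcd d hL
        unfold adjR at hd
        rw [abs_le] at hd
        have := hr' j
        linarith
  have hlo : ω ∉ NB i j t (2 * H) → cov (adj0 i j (adjR n r' ω)) (Wf (adj0 i j (adjR n r' ω)))
      + (if ∃ d ∈ Wf (adj0 i j (adjR n r' ω)), adjR n r' ω i d then 1 else 0)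
      + (if ∃ d ∈ Wf (adj0 i j (adjR n r' ω)), adjR n r' ω j d then 1 else 0) ≤
      matchingNumber (adjR n r' ω) := by
    intro hNB
    obtain ⟨L, q1, q2, q3⟩ := hg hNB
    exact matching_lower i j hij (adjR n r' ω) L q1 q2 q3
  rw [hW] at hlo0 hlo
  simp only [Set.indicator_apply]
  have hXi : ω ∈ XE n i j i r (x - δ) x ↔ (∃ d ∈ Wf (adj0 i j (adjR n r ω)), adjR n r ω i d) ∧
      ¬ ∃ d ∈ Wf (adj0 i j (adjR n r ω)), adjR n r' ω i d := by
    unfold adjR; rw [hi, hi']; rfl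
  have hYj : ω ∈ XE n i j j r y (y + δ) ↔ (∃ d ∈ Wf (adj0 i j (adjR n r ω)), adjR n r' ω j d) ∧
      ¬ ∃ d ∈ Wf (adj0 i j (adjR n r ω)), adjR n r ω j d := by
    unfold adjR; rw [hj, hj']; rfl
  have hmi : (∃ d ∈ Wf (adj0 i j (adjR n r ω)), adjR n r' ω i d) →
      ∃ d ∈ Wf (adj0 i j (adjR n r ω)), adjR n r ω i d := by
    rintro ⟨d, hd, h⟩
    refine ⟨d, hd, ?_⟩
    unfold adjR at h ⊢
    rw [hi'] at h; rw [hi]; linarith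
  have hmj : (∃ d ∈ Wf (adj0 i j (adjR n r ω)), adjR n r ω j d) →
      ∃ d ∈ Wf (adj0 i j (adjR n r ω)), adjR n r' ω j d := by
    rintro ⟨d, hd, h⟩
    refine ⟨d, hd, ?_⟩
    unfold adjR at h ⊢
    rw [hj] at h; rw [hj']; linarith
  exact arith_step _ _ _ _ _ _ _ _ _ _ hXi hYj hmi hmj hup hlo0 hlo

/-! ### Part F: integrated step -/

lemma mu_step {n m : ℕ} (hn : 0 < n) (i j : Fin n) (hij : i ≠ j) (r r' : Fin n → ℝ) (M δ : ℝ)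
    (hM : 0 < M) (hMn : M / n ≤ 1 / 16) (hδ : 0 < δ) (hr : ∀ k, r k ∈ Set.Icc 0 M)
    (hr' : ∀ k, r' k ∈ Set.Icc 0 M)
    (hoff : ∀ k, k ≠ i → k ≠ j → r k = r' k) (hi' : r' i = r i - δ) (hj' : r' j = r j + δ)
    (hord : r' j ≤ r' i) (t : ℕ) :
    muR n m r + ((m * m - m : ℝ) * (1 / 2 * (δ / n) ^ 2 * (1 - 4 * (M / n)) ^ (n + m))) ≤
      muR n m r' + 2 * (2 * (t * (2 * (M / n))) + (1 - (1 - 2 * (M / n)) ^ m) ^ t) := by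
  have hn' : (0 : ℝ) < n := Nat.cast_pos.2 hn
  set H := M / n with hHdef
  set x := r i / n with hx
  set y := r j / n with hy
  set ε := δ / n with hε
  have hH : 0 < H := by positivity
  have hε0 : 0 < ε := by positivity
  have hy0 : 0 ≤ y := div_nonneg (hr j).1 hn'.le
  have hxi : r' i / n = x - ε := by rw [hi', hx, hε]; ring
  have hyj : r' j / n = y + ε := by rw [hj', hy, hε]; ring
  have hxy : y + ε ≤ x - ε := by
    rw [← hxi, ← hyj]; exact div_le_div_of_nonneg_right hord hn'.le
  have hrH : ∀ k, r k / n ≤ H := fun k => div_le_div_of_nonneg_right (hr k).2 hn'.le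
  have hrH' : ∀ k, r' k / n ≤ H := fun k => div_le_div_of_nonneg_right (hr' k).2 hn'.le
  have hxH : x ≤ H := hrH i
  set YJ := XE (b := m) n i j j r y (y + ε) with hYJ
  set XI := XE (b := m) n i j i r (x - ε) x with hXI
  set B := NB (m := m) i j t (2 * H) with hB
  have hpt := pointwise_step (m := m) i j hij r r' x y ε H hε0.le hH hrH' hoff rfl rfl hxi hyj t
  have mY : MeasurableSet YJ := ms_XE _ _ _ _ _ _ _
  have mX : MeasurableSet XI := ms_XE _ _ _ _ _ _ _
  have mB : MeasurableSet B := ms_NB _ _ _ _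
  have iY : Integrable (YJ.indicator (fun _ => (1 : ℝ))) (QQ n m) :=
    (integrable_const 1).indicator mY
  have iX : Integrable (XI.indicator (fun _ => (1 : ℝ))) (QQ n m) :=
    (integrable_const 1).indicator mX
  have iB : Integrable (B.indicator (fun _ => (1 : ℝ))) (QQ n m) :=
    (integrable_const 1).indicator mB
  have hint := integral_mono ((integrable_matching n m r).add iY)
    (((integrable_matching n m r').add iX).add (iB.const_mul 2)) hpt
  rw [integral_add' (integrable_matching n m r) iY,
    integral_add' ((integrable_matching n m r').add iX) (iB.const_mul 2),
    integral_add' (integrable_matching n m r') iX, integral_const_mul,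
    integral_indicator_const _ mY, integral_indicator_const _ mX,
    integral_indicator_const _ mB] at hint
  simp only [smul_eq_mul, mul_one] at hint
  have hBle : (QQ n m).real B ≤ 2 * (t * (2 * H)) + (1 - (1 - 2 * H) ^ m) ^ t := by
    have h1 : (1 - 2 * H) ^ m ≤ 1 := pow_le_one₀ (by linarith) (by linarith)
    have h2 : 0 ≤ (1 - (1 - 2 * H) ^ m) ^ t := pow_nonneg (by linarith) _
    exact ENNReal.toReal_le_of_le_ofReal (by positivity)
      (NB_upper i j hij t (2 * H) (by linarith) (by linarith))
  have hEv : (m * m - m : ℝ) * (1 / 2 * ε ^ 2 * (1 - 4 * H) ^ (n + m)) + (QQ n m).real XI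
      ≤ (QQ n m).real YJ := by
    have h1 := XE_concave n m i j r x y ε H hy0 hε0 hxy hxH hrH
    have h2 := Ev_union_lower (n := n) (m := m) i y ε H hy0 hε0.le (by linarith) hMn
    have h3 := XE_swap n m n i j r y (y + ε)
    rw [← h3] at h1
    have h4 := ENNReal.toReal_mono (measure_ne_top _ _) ((add_le_add le_rfl h2).trans h1)
    rw [ENNReal.toReal_add (measure_ne_top _ _) ENNReal.ofReal_ne_top, ENNReal.toReal_ofReal] at h4
    · change _ + (QQ n m XI).toReal ≤ (QQ n m YJ).toReal
      linarith
    · have hm : (0 : ℝ) ≤ m * m - m := by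
        have : m ≤ m * m := Nat.le_mul_self m
        have : (m : ℝ) ≤ m * m := by exact_mod_cast this
        linarith
      have : 0 ≤ 1 - 4 * H := by linarith
      positivity
  unfold muR
  linarith

/-! ### Part G: chain of transfers -/

lemma transfer_chain {n : ℕ} (F : (Fin n → ℝ) → ℝ) (M c e τ : ℝ) (hc : 0 ≤ c) (he : 0 ≤ e)
    (hstep : ∀ (i j : Fin n) (r r' : Fin n → ℝ) (δ : ℝ), i ≠ j → 0 < δ →
      (∀ k, r k ∈ Set.Icc 0 M) → (∀ k, r' k ∈ Set.Icc 0 M) →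
      (∀ k, k ≠ i → k ≠ j → r k = r' k) → r' i = r i - δ → r' j = r j + δ → r' j ≤ r' i →
      F r + c * δ ^ 2 ≤ F r' + e)
    (r' : Fin n → ℝ) (hanti : Antitone r') (hr' : ∀ k, r' k ∈ Set.Icc 0 M) :
    ∀ (d : ℕ) (r : Fin n → ℝ), (Finset.univ.filter (fun k => r k ≠ r' k)).card ≤ d →
      (∀ k, r k ∈ Set.Icc 0 M) →
      (∀ ℓ : ℕ, ∑ k ∈ Finset.univ.filter (fun k : Fin n => (k : ℕ) < ℓ), r' k ≤
        ∑ k ∈ Finset.univ.filter (fun k : Fin n => (k : ℕ) < ℓ), r k) →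
      ∑ k, r k = ∑ k, r' k →
      F r + c * τ * ∑ k, |r k - r' k| ≤ F r' + d * (c * τ ^ 2 + e) := by
  intro d
  induction d with
  | zero =>
    intro r hcard hr hpre htot
    have h0 : ∀ k, r k = r' k := by
      intro k
      by_contra hk
      have : k ∈ Finset.univ.filter (fun k => r k ≠ r' k) := by simp [hk]
      have := Finset.card_pos.2 ⟨k, this⟩
      omega
    have : r = r' := funext h0
    subst this
    simp
  | succ d ih =>
    intro r hcard hr hpre htot
    have hext : 0 ≤ c * τ ^ 2 + e := by positivity
    by_cases hall : ∀ k, r' k ≤ r k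
    · have h0 : ∀ k, r k = r' k := by
        have := (Finset.sum_eq_sum_iff_of_le (fun k (_ : k ∈ Finset.univ) => hall k)).1 htot.symm
        intro k
        exact (this k (Finset.mem_univ k)).symm
      have : r = r' := funext h0
      subst this
      simp only [sub_self, abs_zero, Finset.sum_const_zero, mul_zero, add_zero]
      have : 0 ≤ ((d + 1 : ℕ) : ℝ) * (c * τ ^ 2 + e) := by positivity
      linarith
    push Not at hall
    obtain ⟨j, hj, hjmin⟩ : ∃ j, r j < r' j ∧ ∀ k, k < j → r' k ≤ r k := by
      have hne : (Finset.univ.filter (fun k => r k < r' k)).Nonempty := by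
        obtain ⟨k, hk⟩ := hall
        exact ⟨k, by simp [hk]⟩
      refine ⟨Finset.min' _ hne, ?_, ?_⟩
      · have := Finset.min'_mem _ hne
        simpa using this
      · intro k hk
        by_contra hcon
        have := Finset.min'_le (Finset.univ.filter (fun k => r k < r' k)) k (by simpa using hcon)
        exact absurd hk (not_lt.2 this)
    obtain ⟨i, hij, hi⟩ : ∃ i, i < j ∧ r' i < r i := by
      by_contra hcon
      push Not at hcon
      have h1 := hpre (j + 1)
      have h2 : ∑ k ∈ Finset.univ.filter (fun k : Fin n => (k : ℕ) < (j : ℕ) + 1), r k <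
          ∑ k ∈ Finset.univ.filter (fun k : Fin n => (k : ℕ) < (j : ℕ) + 1), r' k := by
        refine Finset.sum_lt_sum ?_ ⟨j, by simp, hj⟩
        intro k hk
        have hk' : (k : ℕ) < (j : ℕ) + 1 := by simpa using hk
        rcases lt_or_eq_of_le (Nat.lt_succ_iff.1 hk') with h | h
        · exact hcon k h
        · have : k = j := Fin.ext h
          subst this; exact hj.le
      linarith
    set δ := min (r i - r' i) (r' j - r j) with hδdef
    have hδ : 0 < δ := lt_min (by linarith) (by linarith)
    have hδi : δ ≤ r i - r' i := min_le_left _ _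
    have hδj : δ ≤ r' j - r j := min_le_right _ _
    set r1 : Fin n → ℝ := fun k => r k - (if k = i then δ else 0) + (if k = j then δ else 0)
      with hr1
    have hne : i ≠ j := ne_of_lt hij
    have h1i : r1 i = r i - δ := by simp [hr1, hne]
    have h1j : r1 j = r j + δ := by simp [hr1, hne.symm]
    have h1k : ∀ k, k ≠ i → k ≠ j → r1 k = r k := fun k h1 h2 => by simp [hr1, h1, h2]
    have hr'ij : r' j ≤ r' i := hanti hij.le
    have hr1m : ∀ k, r1 k ∈ Set.Icc 0 M := by
      intro k
      by_cases hki : k = i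
      · subst hki
        rw [h1i]
        exact ⟨by linarith [(hr' k).1], by linarith [(hr k).2]⟩
      by_cases hkj : k = j
      · subst hkj
        rw [h1j]
        exact ⟨by linarith [(hr k).1], by linarith [(hr' k).2]⟩
      rw [h1k k hki hkj]
      exact hr k
    have hs := hstep i j r r1 δ hne hδ hr hr1m (fun k a b => (h1k k a b).symm) h1i h1j
      (by rw [h1i, h1j]; linarith)
    have hsum : ∀ s : Finset (Fin n), i ∈ s → j ∈ s → ∑ k ∈ s, r1 k = ∑ k ∈ s, r k := by
      intro s his hjs
      simp only [hr1, Finset.sum_add_distrib, Finset.sum_sub_distrib, Finset.sum_ite_eq', his, hjs,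
        if_true]
      ring
    have habs : ∀ k, |r1 k - r' k| = |r k - r' k| - (if k = i then δ else 0) -
        (if k = j then δ else 0) := by
      intro k
      by_cases hki : k = i
      · subst hki
        rw [h1i, if_pos rfl, if_neg hne, abs_of_nonneg (by linarith), abs_of_nonneg (by linarith)]
        ring
      by_cases hkj : k = j
      · subst hkj
        rw [h1j, if_neg hki, if_pos rfl, abs_of_nonpos (by linarith), abs_of_nonpos (by linarith)]
        ring
      rw [h1k k hki hkj, if_neg hki, if_neg hkj]
      ring
    have hL1 : ∑ k, |r1 k - r' k| = ∑ k, |r k - r' k| - 2 * δ := by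
      simp only [habs, Finset.sum_sub_distrib, Finset.sum_ite_eq', Finset.mem_univ, if_true]
      ring
    have hcard1 : (Finset.univ.filter (fun k => r1 k ≠ r' k)).card ≤ d := by
      have : (Finset.univ.filter (fun k => r1 k ≠ r' k)).card <
          (Finset.univ.filter (fun k => r k ≠ r' k)).card := by
        apply Finset.card_lt_card
        rw [Finset.ssubset_iff_of_subset]
        · rcases min_choice (r i - r' i) (r' j - r j) with h | h
          · refine ⟨i, by simpa using hi.ne', ?_⟩
            have : r1 i = r' i := by rw [h1i, hδdef, h]; ring
            simp [this]
          · refine ⟨j, by simpa using hj.ne, ?_⟩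
            have : r1 j = r' j := by rw [h1j, hδdef, h]; ring
            simp [this]
        · intro k hk
          simp only [Finset.mem_filter, Finset.mem_univ, true_and] at hk ⊢
          by_cases hki : k = i
          · subst hki; exact hi.ne'
          by_cases hkj : k = j
          · subst hkj; exact hj.ne
          rwa [h1k k hki hkj] at hk
      omega
    have hrec := ih r1 hcard1 hr1m ?_ ?_
    · rw [hL1] at hrec
      have hsq : 0 ≤ c * (δ - τ) ^ 2 := by positivity
      push_cast
      nlinarith
    · intro ℓ
      by_cases hℓ : (j : ℕ) < ℓ
      · rw [hsum]
        · exact hpre ℓ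
        · simp only [Finset.mem_filter, Finset.mem_univ, true_and]
          exact lt_trans hij hℓ
        · simpa using hℓ
      · refine Finset.sum_le_sum fun k hk => ?_
        have hk' : (k : ℕ) < ℓ := by simpa using hk
        have hkj : k < j := by
          show (k : ℕ) < j
          omega
        by_cases hki : k = i
        · subst hki; rw [h1i]; linarith
        · rw [h1k k hki hkj.ne]; exact hjmin k hkj
    · rw [hsum _ (Finset.mem_univ _) (Finset.mem_univ _)]
      exact htot

/-! ### Part H: constants and conclusion -/

lemma one_sub_ge_exp (w : ℝ) (h0 : 0 ≤ w) (h1 : w ≤ 1 / 2) : Real.exp (-(2 * w)) ≤ 1 - w := by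
  rw [Real.exp_neg]
  have h2 := Real.add_one_le_exp (2 * w)
  have h3 : 0 < Real.exp (2 * w) := Real.exp_pos _
  rw [inv_le_iff_one_le_mul₀ h3]
  nlinarith

lemma pow_ge_exp (w : ℝ) (h0 : 0 ≤ w) (h1 : w ≤ 1 / 2) (k : ℕ) :
    Real.exp (-(2 * w * k)) ≤ (1 - w) ^ k := by
  have e : -(2 * w * k) = k * -(2 * w) := by ring
  rw [e, Real.exp_nat_mul]
  exact pow_le_pow_left₀ (Real.exp_pos _).le (one_sub_ge_exp w h0 h1) k

lemma error_bound (β M : ℝ) (hM : 0 < M) (n m : ℕ) (hn : 0 < n) (hMn : M / n ≤ 1 / 16)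
    (hm : (m : ℝ) = β * n) (q : ℝ) (hq : 1 ≤ q) (hqn : q ^ 3 = n) :
    2 * (2 * ((⌈q⌉₊ : ℕ) * (2 * (M / n))) + (1 - (1 - 2 * (M / n)) ^ m) ^ ⌈q⌉₊) ≤
      (16 * M + 4 / Real.exp (-(4 * M * β)) ^ 2) / q ^ 2 := by
  have hn' : (0 : ℝ) < n := Nat.cast_pos.2 hn
  set p := Real.exp (-(4 * M * β)) with hp
  have hp0 : 0 < p := Real.exp_pos _
  have hH0 : 0 < M / n := by positivity
  have hpw : p ≤ (1 - 2 * (M / n)) ^ m := by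
    have := pow_ge_exp (2 * (M / n)) (by linarith) (by linarith) m
    refine le_trans (le_of_eq ?_) this
    rw [hp, hm]
    congr 1
    field_simp
    ring
  have hw1 : (1 - 2 * (M / n)) ^ m ≤ 1 := pow_le_one₀ (by linarith) (by linarith)
  have hq0 : 0 < q := by linarith
  have ht1 : q ≤ (⌈q⌉₊ : ℕ) := Nat.le_ceil q
  have ht2 : ((⌈q⌉₊ : ℕ) : ℝ) ≤ 2 * q := by
    have := Nat.ceil_lt_add_one hq0.le
    linarith
  set t := ⌈q⌉₊ with ht
  have ht0 : (0 : ℝ) < t := lt_of_lt_of_le hq0 ht1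
  have e1 : (t : ℝ) * (2 * (M / n)) ≤ 4 * M / q ^ 2 := by
    rw [← hqn]
    have : (t : ℝ) * (2 * (M / q ^ 3)) ≤ (2 * q) * (2 * (M / q ^ 3)) :=
      mul_le_mul_of_nonneg_right ht2 (by positivity)
    refine this.trans (le_of_eq ?_)
    field_simp
    ring
  have e2 : (1 - (1 - 2 * (M / n)) ^ m) ^ t ≤ 2 / p ^ 2 / q ^ 2 := by
    have h1 : (1 - (1 - 2 * (M / n)) ^ m) ≤ Real.exp (-p) := by
      have := Real.add_one_le_exp (-p)
      linarith
    have h2 := pow_le_pow_left₀ (by linarith) h1 t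
    refine h2.trans ?_
    rw [← Real.exp_nat_mul, mul_neg, Real.exp_neg]
    have h3 := Real.quadratic_le_exp_of_nonneg (x := t * p) (by positivity)
    have h4 : (q * p) ^ 2 / 2 ≤ Real.exp (t * p) := by
      have : (q * p) ^ 2 ≤ (t * p) ^ 2 := by gcongr
      have : 0 < (t : ℝ) * p := by positivity
      linarith
    have h5 : (Real.exp (t * p))⁻¹ ≤ ((q * p) ^ 2 / 2)⁻¹ := by gcongr
    refine h5.trans (le_of_eq ?_)
    field_simp
  calc _ ≤ 2 * (2 * (4 * M / q ^ 2) + 2 / p ^ 2 / q ^ 2) := by gcongr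
    _ = _ := by field_simp; ring

lemma gain_bound (β M : ℝ) (hM : 0 < M) (n m : ℕ) (hn : 0 < n) (hMn : M / n ≤ 1 / 16)
    (hm : (m : ℝ) = β * n) (hm2 : (2 : ℝ) ≤ m) (δ : ℝ) :
    (β ^ 2 / 4 * Real.exp (-(8 * M * (1 + β)))) * δ ^ 2 ≤
      (m * m - m : ℝ) * (1 / 2 * (δ / n) ^ 2 * (1 - 4 * (M / n)) ^ (n + m)) := by
  have hn' : (0 : ℝ) < n := Nat.cast_pos.2 hn
  have hH0 : 0 < M / n := by positivity
  have hpw : Real.exp (-(8 * M * (1 + β))) ≤ (1 - 4 * (M / n)) ^ (n + m) := by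
    have := pow_ge_exp (4 * (M / n)) (by linarith) (by linarith) (n + m)
    refine le_trans (le_of_eq ?_) this
    push_cast
    rw [hm]
    congr 1
    field_simp
    ring
  have hm3 : (m : ℝ) * m / 2 ≤ m * m - m := by nlinarith
  calc _ = (m : ℝ) * m / 2 * (1 / 2 * (δ / n) ^ 2 * Real.exp (-(8 * M * (1 + β)))) := by
        rw [hm]; field_simp; ring
    _ ≤ _ := by
      gcongr
      have : (0 : ℝ) ≤ m * m / 2 := by positivity
      linarith

lemma descSort_antitone {n : ℕ} (x : Fin n → ℝ) : Antitone (descSort x) := by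
  intro a b hab
  have := Tuple.monotone_sort (fun i => -x i) hab
  simp only [Function.comp_apply, neg_le_neg_iff] at this
  exact this

lemma descSort_sum {n : ℕ} (x : Fin n → ℝ) : ∑ k, descSort x k = ∑ k, x k :=
  Equiv.sum_comp (Tuple.sort (fun i => -x i)) x

lemma descSort_mu (n m : ℕ) (x : Fin n → ℝ) : muU 1 n m x = muR n m (descSort x) := by
  rw [muU_eq]
  exact (muR_perm n m x _).symm

/-- **Uniformity principle in dimension one.**
Fix a demand-to-supply ratio `β > 0` and a constant `M ≥ max {1, 1/β}`, and let `k = 1`.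
There exist a constant `C > 0` (depending only on `β` and `M`) and an integer `N` such that
for all `n ≥ N` with `m = βn`, and all service-range vectors `r, r' ∈ [0,M]^n` with
`r ⪰ r'` and `‖r^↓ - r'^↓‖₁ > θ n` for some `θ > C (log n / n)^{1/3}`, the expected
maximum matching sizes satisfy `μ_m(r') > μ_m(r)`. -/
theorem uniformity_principle_dim_one (β M : ℝ) (hβ : 0 < β) (hM : max 1 β⁻¹ ≤ M) :
    ∃ C : ℝ, 0 < C ∧ ∃ N : ℕ, ∀ n : ℕ, N ≤ n → ∀ m : ℕ, (m : ℝ) = β * n →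
      ∀ r r' : Fin n → ℝ,
        (∀ i, r i ∈ Set.Icc (0 : ℝ) M) → (∀ i, r' i ∈ Set.Icc (0 : ℝ) M) →
        Majorizes r r' →
        ∀ θ : ℝ, C * (Real.log n / n) ^ ((1 : ℝ) / 3) < θ →
          θ * n < ∑ i, |descSort r i - descSort r' i| →
          muU 1 n m r < muU 1 n m r' := by
  have hM1 : 1 ≤ M := le_trans (le_max_left _ _) hM
  have hM0 : 0 < M := by linarith
  set c := β ^ 2 / 4 * Real.exp (-(8 * M * (1 + β))) with hc
  set K := 16 * M + 4 / Real.exp (-(4 * M * β)) ^ 2 with hK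
  have hc0 : 0 < c := by positivity
  have hK0 : 0 < K := by positivity
  refine ⟨Real.sqrt (4 * K / c), by positivity, max 3 (max ⌈16 * M⌉₊ ⌈2 / β⌉₊), ?_⟩
  intro n hnN m hm r r' hr hr' hmaj θ hθ hL
  have hn3 : 3 ≤ n := le_trans (le_max_left _ _) hnN
  have hnM : 16 * M ≤ n :=
    Nat.ceil_le.1 (le_trans (le_trans (le_max_left _ _) (le_max_right _ _)) hnN)
  have hnβ : 2 / β ≤ n :=
    Nat.ceil_le.1 (le_trans (le_trans (le_max_right _ _) (le_max_right _ _)) hnN)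
  have hn : 0 < n := by omega
  have hn' : (0 : ℝ) < n := Nat.cast_pos.2 hn
  have hn3' : (3 : ℝ) ≤ n := by exact_mod_cast hn3
  have hMn : M / n ≤ 1 / 16 := by
    rw [div_le_div_iff₀ hn' (by norm_num)]; linarith
  have hm2 : (2 : ℝ) ≤ m := by
    rw [hm]
    rw [div_le_iff₀ hβ] at hnβ
    linarith
  set q : ℝ := (n : ℝ) ^ ((1 : ℝ) / 3) with hq
  have hq1 : 1 ≤ q := Real.one_le_rpow (by linarith) (by norm_num)
  have hq0 : 0 < q := by linarith
  have hqn : q ^ 3 = n := by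
    rw [hq, ← Real.rpow_natCast, ← Real.rpow_mul hn'.le]
    norm_num
  have herr := error_bound β M hM0 n m hn hMn hm q hq1 hqn
  rw [← hK] at herr
  have hθq : Real.sqrt (4 * K / c) / q < θ := by
    refine lt_of_le_of_lt ?_ hθ
    rw [div_eq_mul_inv]
    refine mul_le_mul_of_nonneg_left ?_ (Real.sqrt_nonneg _)
    have hlog : 1 ≤ Real.log n := by
      rw [Real.le_log_iff_exp_le hn']
      have := Real.exp_one_lt_d9
      linarith
    rw [hq, ← Real.inv_rpow hn'.le]
    refine Real.rpow_le_rpow (by positivity) ?_ (by norm_num)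
    rw [inv_eq_one_div]
    gcongr
  have hθ0 : 0 < θ := lt_of_le_of_lt (by positivity) hθq
  have hθ2 : K / q ^ 2 ≤ c * θ ^ 2 / 4 := by
    have h1 : (Real.sqrt (4 * K / c) / q) ^ 2 ≤ θ ^ 2 :=
      pow_le_pow_left₀ (by positivity) hθq.le 2
    rw [div_pow, Real.sq_sqrt (by positivity)] at h1
    have h2 : c * (4 * K / c / q ^ 2) ≤ c * θ ^ 2 := mul_le_mul_of_nonneg_left h1 hc0.le
    have h3 : c * (4 * K / c / q ^ 2) = 4 * (K / q ^ 2) := by field_simp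
    linarith
  have hchain := transfer_chain (muR n m) M c (K / q ^ 2) (θ / 2) hc0.le (by positivity)
    (fun i j s s' δ hij hδ hs hs' hoff hi hj hord => by
      have h1 := mu_step (m := m) hn i j hij s s' M δ hM0 hMn hδ hs hs' hoff hi hj hord ⌈q⌉₊
      have h2 := gain_bound β M hM0 n m hn hMn hm hm2 δ
      rw [← hc] at h2
      linarith) (descSort r') (descSort_antitone r') (fun k => hr' _) n (descSort r)
    (le_trans (Finset.card_le_univ _) (by simp)) (fun k => hr _) hmaj.1
    (by rw [descSort_sum, descSort_sum]; exact hmaj.2)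
  rw [descSort_mu, descSort_mu]
  have h5 : c * (θ / 2) * (θ * n) < c * (θ / 2) * ∑ i, |descSort r i - descSort r' i| :=
    mul_lt_mul_of_pos_left hL (by positivity)
  have h6 : (n : ℝ) * (K / q ^ 2) ≤ n * (c * θ ^ 2 / 4) :=
    mul_le_mul_of_nonneg_left hθ2 hn'.le
  nlinarith

end
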